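/- Let n and k be positive integers with k ≡ 0 (mod 3), k ≥ 3 and n ≥ k+4, and let G be a potted graph of order n whose cycle has length k. Then the number m(G) of maximum dissociation sets of G satisfies: m(G) ≤ 3^{(n−k)/3} + (n−k)/3 + 1 if n ≡ 0 (mod 3); m(G) ≤ 3^{(n−k−1)/3} + 1 if n ≡ 1 (mod 3); and m(G) ≤ 3^{(n−k−2)/3} if n ≡ 2 (mod 3). -/

import Mathlib

open scoped Classical

variable {V : Type*}

/-- The number of neighbors of `v` that lie inside the finite set `s`,
i.e. the degree of `v` in the subgraph induced by `s` (when `v ∈ s`). -/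
noncomputable def nbrCount (G : SimpleGraph V) (s : Finset V) (v : V) : ℕ :=
  {w ∈ (s : Set V) | G.Adj v w}.ncard

/-- `s` is a dissociation set of `G`: the subgraph induced by `s` has maximum degree at most 1. -/
def IsDissoc (G : SimpleGraph V) (s : Finset V) : Prop :=
  ∀ v ∈ s, nbrCount G s v ≤ 1

/-- The dissociation number of the subgraph of `G` induced by `A`. -/
noncomputable def dissNumOn (G : SimpleGraph V) (A : Set V) : ℕ :=
  sSup {n | ∃ s : Finset V, ↑s ⊆ A ∧ IsDissoc G s ∧ s.card = n}

/-- `s` is a maximum dissociation set of the subgraph of `G` induced by `A`. -/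
def IsMaxDissocOn (G : SimpleGraph V) (A : Set V) (s : Finset V) : Prop :=
  ↑s ⊆ A ∧ IsDissoc G s ∧ s.card = dissNumOn G A

/-- The number of maximum dissociation sets of the subgraph of `G` induced by `A`. -/
noncomputable def numMaxDissocOn (G : SimpleGraph V) (A : Set V) : ℕ :=
  Nat.card {s : Finset V // IsMaxDissocOn G A s}

/-- The dissociation number of `G`. -/
noncomputable def dissNum (G : SimpleGraph V) : ℕ :=
  dissNumOn G Set.univ

/-- `s` is a maximum dissociation set of `G`. -/
def IsMaxDissoc (G : SimpleGraph V) (s : Finset V) : Prop :=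
  IsMaxDissocOn G Set.univ s

/-- The number `m(G)` of maximum dissociation sets of `G`. -/
noncomputable def numMaxDissoc (G : SimpleGraph V) : ℕ :=
  numMaxDissocOn G Set.univ

/-- `m(G[A], u⁻)`: maximum dissociation sets of `G[A]` not containing `u`. -/
noncomputable def numMaxDissocOnAway (G : SimpleGraph V) (A : Set V) (u : V) : ℕ :=
  Nat.card {s : Finset V // IsMaxDissocOn G A s ∧ u ∉ s}

/-- `m(G[A], u⁰)`: maximum dissociation sets of `G[A]` containing `u` with induced degree 0. -/
noncomputable def numMaxDissocOnDeg0 (G : SimpleGraph V) (A : Set V) (u : V) : ℕ :=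
  Nat.card {s : Finset V // IsMaxDissocOn G A s ∧ u ∈ s ∧ nbrCount G s u = 0}

/-- `m(G[A], u¹)`: maximum dissociation sets of `G[A]` containing `u` with induced degree 1. -/
noncomputable def numMaxDissocOnDeg1 (G : SimpleGraph V) (A : Set V) (u : V) : ℕ :=
  Nat.card {s : Finset V // IsMaxDissocOn G A s ∧ u ∈ s ∧ nbrCount G s u = 1}

/-- `m(G, u⁻)`. -/
noncomputable def numMaxDissocAway (G : SimpleGraph V) (u : V) : ℕ :=
  numMaxDissocOnAway G Set.univ u

/-- `m(G, u⁰)`. -/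
noncomputable def numMaxDissocDeg0 (G : SimpleGraph V) (u : V) : ℕ :=
  numMaxDissocOnDeg0 G Set.univ u

/-- `m(G, u¹)`. -/
noncomputable def numMaxDissocDeg1 (G : SimpleGraph V) (u : V) : ℕ :=
  numMaxDissocOnDeg1 G Set.univ u

/-- `m̄`: relative count, `numMaxDissocOn G B` if `dissNumOn G B = dissNumOn G A`, else 0. -/
noncomputable def mbar (G : SimpleGraph V) (A B : Set V) : ℕ :=
  if dissNumOn G B = dissNumOn G A then numMaxDissocOn G B else 0

/-- `G` is a potted graph whose (unique) cycle has length `k`: `G` is connected and unicyclic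
(equivalently, connected with as many edges as vertices), and its cycle has length `k` and
contains a unique vertex of degree larger than 2. -/
def IsPotted (G : SimpleGraph V) (k : ℕ) : Prop :=
  G.Connected ∧ G.edgeSet.ncard = Nat.card V ∧
    ∃ (v : V) (c : G.Walk v v), c.IsCycle ∧ c.length = k ∧
      ∃! u, u ∈ c.support ∧ 2 < (G.neighborSet u).ncard

/-! ### Numerical bounds -/

/-- bound for the total number -/
def al (r : ℕ) : ℤ :=
  3 ^ (r / 3) + (if r % 3 = 0 then ((r / 3 : ℕ) : ℤ) + 2 else if r % 3 = 1 then 1 else 0)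

/-- bound used in the final estimate -/
def bb (r : ℕ) : ℤ :=
  3 ^ (r / 3) + (if r % 3 = 0 then ((r / 3 : ℕ) : ℤ) + 1 else if r % 3 = 1 then 1 else 0)

/-- three times the bound for the mixed sums -/
def ga (r : ℕ) : ℤ :=
  if r % 3 = 0 then 3 * 3 ^ (r / 3) + 3 else if r % 3 = 1 then 2 * 3 ^ (r / 3) + 3
    else 2 * 3 ^ (r / 3)

/-- three times the bound for forced trees -/
def de (r : ℕ) : ℤ := 3 ^ (r / 3) + (if r % 3 = 0 then 3 else 0)

/-- the pure power -/
def ph (r : ℕ) : ℤ := 3 ^ (r / 3)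

structure SA (r : ℕ) (E Z O : ℤ) : Prop where
  h1 : E + 2 * Z + O ≤ al r
  h2 : 3 * (Z + O) ≤ de r
  h3 : 3 * (E + Z) ≤ ga r
  hE : 1 ≤ E
  hZ : 1 ≤ Z
  hO : 0 ≤ O
  hb : r = 0 ∨ E + 2 * Z ≤ bb r

structure SB (r : ℕ) (E Z O : ℤ) : Prop where
  h1 : E + Z + O ≤ al r
  h3 : 3 * (E + O) ≤ ga r
  hE : 1 ≤ E
  hZ : 1 ≤ Z
  hO : 1 ≤ O

structure SC (r : ℕ) (E Z O : ℤ) : Prop where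
  h1 : E + Z + O ≤ al r
  h3 : 3 * (E + Z) ≤ ga r
  hE : 1 ≤ E
  hZ : 1 ≤ Z
  hO : 1 ≤ O

structure SD (r : ℕ) (E O : ℤ) : Prop where
  h1 : E + O ≤ al r
  h2 : E ≤ ph r
  hE : 1 ≤ E
  hO : 0 ≤ O

theorem pow_ge (s : ℕ) : (2 : ℤ) * s + 1 ≤ 3 ^ s := by
  induction s with
  | zero => simp
  | succ n ih => rw [pow_succ]; push_cast; linarith

/-- explicit values according to the residue -/
def Val (i : ℕ) (s X a b g d : ℤ) : Prop :=
  (i = 0 ∧ a = X + s + 2 ∧ b = X + s + 1 ∧ g = 3 * X + 3 ∧ d = X + 3) ∨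
  (i = 1 ∧ a = X + 1 ∧ b = X + 1 ∧ g = 2 * X + 3 ∧ d = X) ∨
  (i = 2 ∧ a = X ∧ b = X ∧ g = 2 * X ∧ d = X)

theorem val_of (r q k : ℕ) (h : r = 3 * q + k) (hk : k < 3) :
    Val k q (3 ^ q) (al r) (bb r) (ga r) (de r) ∧ ph r = 3 ^ q := by
  have h1 : r / 3 = q := by omega
  have h2 : r % 3 = k := by omega
  unfold Val al bb ga de ph
  rw [h1, h2]
  interval_cases k <;> simp <;> ring_nf <;> trivial

/-- data for one index -/
structure Dat (i : ℕ) (r : ℕ) (s X : ℤ) : Prop where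
  hs : 0 ≤ s
  hX : 2 * s + 1 ≤ X
  v : Val i s X (al r) (bb r) (ga r) (de r)
  p : ph r = X
  z : i = 0 → (r = 0 ∧ s = 0 ∧ X = 1) ∨ (1 ≤ s ∧ 3 ≤ X ∧ 6 * s - 3 ≤ X)

theorem step (h r r' : ℕ) : ∃ (i j : ℕ) (s t X Y : ℤ), i < 3 ∧ j < 3 ∧
    Dat i r s X ∧ Dat j r' t Y ∧
    Val ((i + j + h) % 3) (s + t + ((i + j + h) / 3 : ℕ)) (X * Y * 3 ^ ((i + j + h) / 3))
      (al (r + r' + h)) (bb (r + r' + h)) (ga (r + r' + h)) (de (r + r' + h)) ∧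
    ph (r + r' + h) = X * Y * 3 ^ ((i + j + h) / 3) := by
  have key : ∀ r : ℕ, Dat (r % 3) r ((r / 3 : ℕ) : ℤ) (3 ^ (r / 3)) := by
    intro r
    have hv := val_of r (r / 3) (r % 3) (by omega) (by omega)
    refine ⟨by positivity, pow_ge _, hv.1, hv.2, fun h0 => ?_⟩
    rcases Nat.eq_zero_or_pos (r / 3) with h1 | h1
    · left; rw [h1]; simp; omega
    · right
      obtain ⟨m, hm⟩ : ∃ m, r / 3 = m + 1 := ⟨r / 3 - 1, by omega⟩
      rw [hm, pow_succ]
      have := pow_ge m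
      push_cast
      refine ⟨by linarith [(Nat.cast_nonneg m : (0:ℤ) ≤ m)], by linarith [(Nat.cast_nonneg m : (0:ℤ) ≤ m)], by linarith⟩
  refine ⟨r % 3, r' % 3, _, _, _, _, by omega, by omega, key r, key r', ?_⟩
  have hv := val_of (r + r' + h) (r / 3 + r' / 3 + (r % 3 + r' % 3 + h) / 3)
    ((r % 3 + r' % 3 + h) % 3) (by omega) (by omega)
  rw [pow_add, pow_add] at hv
  push_cast at hv ⊢
  exact hv
theorem SA.cases {r i : ℕ} {s X E Z O : ℤ} (a : SA r E Z O) (d : Dat i r s X) :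
    (i = 0 ∧ E = 1 ∧ Z = 1 ∧ O = 0 ∧ X = 1 ∧ s = 0) ∨
    (i = 0 ∧ 0 ≤ s - 1 ∧ 0 ≤ X - 6 * s + 3 ∧ 0 ≤ X - 3 ∧ 0 ≤ X + s + 2 - (E + 2 * Z + O) ∧ 0 ≤ X + 3 - 3 * (Z + O) ∧ 0 ≤ 3 * X + 3 - 3 * (E + Z) ∧ 0 ≤ E - 1 ∧ 0 ≤ Z - 1 ∧ 0 ≤ O) ∨
    (i = 1 ∧ 0 ≤ s ∧ 0 ≤ X - 2 * s - 1 ∧ 0 ≤ X - 3 ∧ 0 ≤ X + 1 - (E + 2 * Z + O) ∧ 0 ≤ X - 3 * (Z + O) ∧ 0 ≤ 2 * X + 3 - 3 * (E + Z) ∧ 0 ≤ E - 1 ∧ 0 ≤ Z - 1 ∧ 0 ≤ O) ∨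
    (i = 2 ∧ 0 ≤ s ∧ 0 ≤ X - 2 * s - 1 ∧ 0 ≤ X - 3 ∧ 0 ≤ X - (E + 2 * Z + O) ∧ 0 ≤ X - 3 * (Z + O) ∧ 0 ≤ 2 * X - 3 * (E + Z) ∧ 0 ≤ E - 1 ∧ 0 ≤ Z - 1 ∧ 0 ≤ O) := by
  obtain ⟨hs, hX, v, p, z⟩ := d
  obtain ⟨h1, h2, h3, hE, hZ, hO, -⟩ := a
  rcases v with ⟨rfl, e1, e2, e3, e4⟩ | ⟨rfl, e1, e2, e3, e4⟩ | ⟨rfl, e1, e2, e3, e4⟩ <;>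
    rw [e1] at h1 <;> rw [e4] at h2 <;> rw [e3] at h3
  · rcases z rfl with ⟨-, rfl, rfl⟩ | ⟨z1, z2, z3⟩
    · left; omega
    · right; left; omega
  · right; right; left; omega
  · right; right; right; omega

theorem SB.cases {r i : ℕ} {s X E Z O : ℤ} (a : SB r E Z O) (d : Dat i r s X) :
    (i = 0 ∧ 0 ≤ s ∧ 0 ≤ X - 2 * s - 1 ∧ 0 ≤ X + s + 2 - (E + Z + O) ∧ 0 ≤ 3 * X + 3 - 3 * (E + O) ∧ 0 ≤ E - 1 ∧ 0 ≤ Z - 1 ∧ 0 ≤ O - 1) ∨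
    (i = 1 ∧ 0 ≤ s ∧ 0 ≤ X - 2 * s - 1 ∧ 0 ≤ X + 1 - (E + Z + O) ∧ 0 ≤ 2 * X + 3 - 3 * (E + O) ∧ 0 ≤ E - 1 ∧ 0 ≤ Z - 1 ∧ 0 ≤ O - 1) ∨
    (i = 2 ∧ 0 ≤ s ∧ 0 ≤ X - 2 * s - 1 ∧ 0 ≤ X - (E + Z + O) ∧ 0 ≤ 2 * X - 3 * (E + O) ∧ 0 ≤ E - 1 ∧ 0 ≤ Z - 1 ∧ 0 ≤ O - 1) := by
  obtain ⟨hs, hX, v, p, z⟩ := d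
  obtain ⟨h1, h3, hE, hZ, hO⟩ := a
  rcases v with ⟨rfl, e1, e2, e3, e4⟩ | ⟨rfl, e1, e2, e3, e4⟩ | ⟨rfl, e1, e2, e3, e4⟩ <;>
    rw [e1] at h1 <;> rw [e3] at h3
  · left; omega
  · right; left; omega
  · right; right; omega

theorem SC.cases {r i : ℕ} {s X E Z O : ℤ} (a : SC r E Z O) (d : Dat i r s X) :
    (i = 0 ∧ 0 ≤ s ∧ 0 ≤ X - 2 * s - 1 ∧ 0 ≤ X + s + 2 - (E + Z + O) ∧ 0 ≤ 3 * X + 3 - 3 * (E + Z) ∧ 0 ≤ E - 1 ∧ 0 ≤ Z - 1 ∧ 0 ≤ O - 1) ∨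
    (i = 1 ∧ 0 ≤ s ∧ 0 ≤ X - 2 * s - 1 ∧ 0 ≤ X + 1 - (E + Z + O) ∧ 0 ≤ 2 * X + 3 - 3 * (E + Z) ∧ 0 ≤ E - 1 ∧ 0 ≤ Z - 1 ∧ 0 ≤ O - 1) ∨
    (i = 2 ∧ 0 ≤ s ∧ 0 ≤ X - 2 * s - 1 ∧ 0 ≤ X - (E + Z + O) ∧ 0 ≤ 2 * X - 3 * (E + Z) ∧ 0 ≤ E - 1 ∧ 0 ≤ Z - 1 ∧ 0 ≤ O - 1) := by
  obtain ⟨hs, hX, v, p, z⟩ := d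
  obtain ⟨h1, h3, hE, hZ, hO⟩ := a
  rcases v with ⟨rfl, e1, e2, e3, e4⟩ | ⟨rfl, e1, e2, e3, e4⟩ | ⟨rfl, e1, e2, e3, e4⟩ <;>
    rw [e1] at h1 <;> rw [e3] at h3
  · left; omega
  · right; left; omega
  · right; right; omega

theorem SD.cases {r i : ℕ} {s X E O : ℤ} (a : SD r E O) (d : Dat i r s X) :
    (i = 0 ∧ 0 ≤ s ∧ 0 ≤ X - 2 * s - 1 ∧ 0 ≤ X + s + 2 - (E + O) ∧ 0 ≤ X - E ∧ 0 ≤ E - 1 ∧ 0 ≤ O) ∨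
    (i = 1 ∧ 0 ≤ s ∧ 0 ≤ X - 2 * s - 1 ∧ 0 ≤ X + 1 - (E + O) ∧ 0 ≤ X - E ∧ 0 ≤ E - 1 ∧ 0 ≤ O) ∨
    (i = 2 ∧ 0 ≤ s ∧ 0 ≤ X - 2 * s - 1 ∧ 0 ≤ X - (E + O) ∧ 0 ≤ X - E ∧ 0 ≤ E - 1 ∧ 0 ≤ O) := by
  obtain ⟨hs, hX, v, p, z⟩ := d
  obtain ⟨h1, h2, hE, hO⟩ := a
  rcases v with ⟨rfl, e1, e2, e3, e4⟩ | ⟨rfl, e1, e2, e3, e4⟩ | ⟨rfl, e1, e2, e3, e4⟩ <;>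
    rw [e1] at h1 <;> rw [p] at h2
  · left; omega
  · right; left; omega
  · right; right; omega

theorem ph_le_al (r : ℕ) : ph r ≤ al r := by
  unfold ph al
  split_ifs <;> linarith [(Nat.cast_nonneg (r / 3) : (0:ℤ) ≤ ((r / 3 : ℕ) : ℤ))]

theorem om {a b : ℤ} (ha : 1 ≤ a) (hb : 1 ≤ b) : 1 ≤ a * b := by nlinarith

theorem jAA {r r' : ℕ} {E Z O e z o : ℤ} (a : SA r E Z O) (b : SA r' e z o) :
    SB (r + r') (E * (z + o)) (Z * e) (Z * z) := by
  obtain ⟨i, j, s, t, X, Y, hi, hj, da, db, hv, hp⟩ := step 0 r r'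
  rw [add_zero] at hv hp
  have g1 : E * (z + o) + Z * e + Z * z ≤ al (r + r') := by
    rcases a.cases da with ⟨rfl, rfl, rfl, rfl, rfl, rfl⟩ | ⟨rfl, as, aX, aX3, aal, ade, aga, aE, aZ, aO⟩ | ⟨rfl, as, aX, aX3, aal, ade, aga, aE, aZ, aO⟩ | ⟨rfl, as, aX, aX3, aal, ade, aga, aE, aZ, aO⟩ <;>
    rcases b.cases db with ⟨rfl, rfl, rfl, rfl, rfl, rfl⟩ | ⟨rfl, bs, bX, bX3, bal, bde, bga, bE, bZ, bO⟩ | ⟨rfl, bs, bX, bX3, bal, bde, bga, bE, bZ, bO⟩ | ⟨rfl, bs, bX, bX3, bal, bde, bga, bE, bZ, bO⟩ <;>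
    norm_num [Val] at hv hp <;>
    rw [hv.1] <;>
    first
    | linarith
    | linarith [mul_nonneg as bga, mul_nonneg as bE, mul_nonneg aX bde, mul_nonneg aX bga, mul_nonneg aX bO, mul_nonneg aX bX3, mul_nonneg aal bE, mul_nonneg ade bX3, mul_nonneg aga bga, mul_nonneg aga bZ, mul_nonneg aE bde, mul_nonneg aE bZ, mul_nonneg aZ bga, mul_nonneg aO bga, mul_nonneg aO bE, mul_nonneg aO bZ, mul_nonneg aX3 bX3]
  have g2 : 3 * (E * (z + o) + Z * z) ≤ ga (r + r') := by
    rcases a.cases da with ⟨rfl, rfl, rfl, rfl, rfl, rfl⟩ | ⟨rfl, as, aX, aX3, aal, ade, aga, aE, aZ, aO⟩ | ⟨rfl, as, aX, aX3, aal, ade, aga, aE, aZ, aO⟩ | ⟨rfl, as, aX, aX3, aal, ade, aga, aE, aZ, aO⟩ <;>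
    rcases b.cases db with ⟨rfl, rfl, rfl, rfl, rfl, rfl⟩ | ⟨rfl, bs, bX, bX3, bal, bde, bga, bE, bZ, bO⟩ | ⟨rfl, bs, bX, bX3, bal, bde, bga, bE, bZ, bO⟩ | ⟨rfl, bs, bX, bX3, bal, bde, bga, bE, bZ, bO⟩ <;>
    norm_num [Val] at hv hp <;>
    rw [hv.2.2.1] <;>
    first
    | linarith
    | linarith [mul_nonneg aga bga, mul_nonneg aga bE, mul_nonneg aga bZ, mul_nonneg aE bde, mul_nonneg aE bX3, mul_nonneg aZ bde, mul_nonneg aZ bO, mul_nonneg aZ bX3]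
  exact ⟨g1, g2, om a.hE (by linarith [b.hZ, b.hO]), om a.hZ b.hE, om a.hZ b.hZ⟩

theorem jAB {r r' : ℕ} {E Z O e z o : ℤ} (a : SA r E Z O) (b : SB r' e z o) :
    SC (r + r') (E * o) (Z * e) (O * e + Z * z) := by
  obtain ⟨i, j, s, t, X, Y, hi, hj, da, db, hv, hp⟩ := step 0 r r'
  rw [add_zero] at hv hp
  have g1 : E * o + Z * e + (O * e + Z * z) ≤ al (r + r') := by
    rcases a.cases da with ⟨rfl, rfl, rfl, rfl, rfl, rfl⟩ | ⟨rfl, as, aX, aX3, aal, ade, aga, aE, aZ, aO⟩ | ⟨rfl, as, aX, aX3, aal, ade, aga, aE, aZ, aO⟩ | ⟨rfl, as, aX, aX3, aal, ade, aga, aE, aZ, aO⟩ <;>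
    rcases b.cases db with ⟨rfl, bs, bX, bal, bga, bE, bZ, bO⟩ | ⟨rfl, bs, bX, bal, bga, bE, bZ, bO⟩ | ⟨rfl, bs, bX, bal, bga, bE, bZ, bO⟩ <;>
    norm_num [Val] at hv hp <;>
    rw [hv.1] <;>
    first
    | linarith
    | linarith [mul_nonneg ade bga, mul_nonneg ade bE, mul_nonneg aga bE, mul_nonneg aga bO, mul_nonneg aE bE, mul_nonneg aZ bX, mul_nonneg aZ bal, mul_nonneg aZ bO, mul_nonneg aO bga, mul_nonneg aX3 bga, mul_nonneg aX3 bE, mul_nonneg aX bX, mul_nonneg aX bs, mul_nonneg ade bZ, mul_nonneg aO bZ, mul_nonneg as bX, mul_nonneg as bs, mul_nonneg aX3 bal]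
  have g2 : 3 * (E * o + Z * e) ≤ ga (r + r') := by
    rcases a.cases da with ⟨rfl, rfl, rfl, rfl, rfl, rfl⟩ | ⟨rfl, as, aX, aX3, aal, ade, aga, aE, aZ, aO⟩ | ⟨rfl, as, aX, aX3, aal, ade, aga, aE, aZ, aO⟩ | ⟨rfl, as, aX, aX3, aal, ade, aga, aE, aZ, aO⟩ <;>
    rcases b.cases db with ⟨rfl, bs, bX, bal, bga, bE, bZ, bO⟩ | ⟨rfl, bs, bX, bal, bga, bE, bZ, bO⟩ | ⟨rfl, bs, bX, bal, bga, bE, bZ, bO⟩ <;>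
    norm_num [Val] at hv hp <;>
    rw [hv.2.2.1] <;>
    first
    | linarith
    | linarith [mul_nonneg aga bE, mul_nonneg aga bO, mul_nonneg aE bE, mul_nonneg aZ bO, mul_nonneg aX3 bga, mul_nonneg aX3 bE, mul_nonneg aX3 bO]
  exact ⟨g1, g2, om a.hE b.hO, om a.hZ b.hE, by nlinarith [mul_nonneg a.hO (by linarith [b.hE] : (0:ℤ) ≤ e), om a.hZ b.hZ]⟩

theorem jAC {r r' : ℕ} {E Z O e z o : ℤ} (a : SA r E Z O) (b : SC r' e z o) :
    SA (r + r' + 3) (E * (e + z + o)) (Z * e) (O * e + Z * z) := by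
  obtain ⟨i, j, s, t, X, Y, hi, hj, da, db, hv, hp⟩ := step 3 r r'
  have g1 : E * (e + z + o) + 2 * (Z * e) + (O * e + Z * z) ≤ al (r + r' + 3) := by
    rcases a.cases da with ⟨rfl, rfl, rfl, rfl, rfl, rfl⟩ | ⟨rfl, as, aX, aX3, aal, ade, aga, aE, aZ, aO⟩ | ⟨rfl, as, aX, aX3, aal, ade, aga, aE, aZ, aO⟩ | ⟨rfl, as, aX, aX3, aal, ade, aga, aE, aZ, aO⟩ <;>
    rcases b.cases db with ⟨rfl, bs, bX, bal, bga, bE, bZ, bO⟩ | ⟨rfl, bs, bX, bal, bga, bE, bZ, bO⟩ | ⟨rfl, bs, bX, bal, bga, bE, bZ, bO⟩ <;>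
    norm_num [Val] at hv hp <;>
    rw [hv.1] <;>
    first
    | linarith
    | linarith [mul_nonneg ade bX, mul_nonneg ade bE, mul_nonneg ade bZ, mul_nonneg aga bs, mul_nonneg aga bal, mul_nonneg aga bga, mul_nonneg aga bE, mul_nonneg aga bZ, mul_nonneg aE bal, mul_nonneg aE bE, mul_nonneg aZ bal, mul_nonneg aZ bga, mul_nonneg aZ bE, mul_nonneg aZ bZ, mul_nonneg aO bX, mul_nonneg aO bZ, mul_nonneg aX3 bX, mul_nonneg aX3 bO]
  have g2 : 3 * (Z * e + (O * e + Z * z)) ≤ de (r + r' + 3) := by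
    rcases a.cases da with ⟨rfl, rfl, rfl, rfl, rfl, rfl⟩ | ⟨rfl, as, aX, aX3, aal, ade, aga, aE, aZ, aO⟩ | ⟨rfl, as, aX, aX3, aal, ade, aga, aE, aZ, aO⟩ | ⟨rfl, as, aX, aX3, aal, ade, aga, aE, aZ, aO⟩ <;>
    rcases b.cases db with ⟨rfl, bs, bX, bal, bga, bE, bZ, bO⟩ | ⟨rfl, bs, bX, bal, bga, bE, bZ, bO⟩ | ⟨rfl, bs, bX, bal, bga, bE, bZ, bO⟩ <;>
    norm_num [Val] at hv hp <;>
    rw [hv.2.2.2] <;>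
    first
    | linarith
    | linarith [mul_nonneg ade bga, mul_nonneg ade bE, mul_nonneg aga bZ, mul_nonneg aE bZ, mul_nonneg aZ bga, mul_nonneg aO bga, mul_nonneg aX3 bE, mul_nonneg aX bZ, mul_nonneg as bZ]
  have g3 : 3 * (E * (e + z + o) + Z * e) ≤ ga (r + r' + 3) := by
    rcases a.cases da with ⟨rfl, rfl, rfl, rfl, rfl, rfl⟩ | ⟨rfl, as, aX, aX3, aal, ade, aga, aE, aZ, aO⟩ | ⟨rfl, as, aX, aX3, aal, ade, aga, aE, aZ, aO⟩ | ⟨rfl, as, aX, aX3, aal, ade, aga, aE, aZ, aO⟩ <;>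
    rcases b.cases db with ⟨rfl, bs, bX, bal, bga, bE, bZ, bO⟩ | ⟨rfl, bs, bX, bal, bga, bE, bZ, bO⟩ | ⟨rfl, bs, bX, bal, bga, bE, bZ, bO⟩ <;>
    norm_num [Val] at hv hp <;>
    rw [hv.2.2.1] <;>
    first
    | linarith
    | linarith [mul_nonneg ade bX, mul_nonneg aga bs, mul_nonneg aga bga, mul_nonneg aga bE, mul_nonneg aga bZ, mul_nonneg aE bal, mul_nonneg aE bga, mul_nonneg aE bE, mul_nonneg aE bZ, mul_nonneg aZ bga, mul_nonneg aZ bE, mul_nonneg aZ bZ, mul_nonneg aO bX, mul_nonneg aX3 bX]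
  have g4 : E * (e + z + o) + 2 * (Z * e) ≤ bb (r + r' + 3) := by
    rcases a.cases da with ⟨rfl, rfl, rfl, rfl, rfl, rfl⟩ | ⟨rfl, as, aX, aX3, aal, ade, aga, aE, aZ, aO⟩ | ⟨rfl, as, aX, aX3, aal, ade, aga, aE, aZ, aO⟩ | ⟨rfl, as, aX, aX3, aal, ade, aga, aE, aZ, aO⟩ <;>
    rcases b.cases db with ⟨rfl, bs, bX, bal, bga, bE, bZ, bO⟩ | ⟨rfl, bs, bX, bal, bga, bE, bZ, bO⟩ | ⟨rfl, bs, bX, bal, bga, bE, bZ, bO⟩ <;>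
    norm_num [Val] at hv hp <;>
    rw [hv.2.1] <;>
    first
    | linarith
    | linarith [mul_nonneg ade bX, mul_nonneg aga bs, mul_nonneg aga bga, mul_nonneg aga bE, mul_nonneg aga bZ, mul_nonneg aE bal, mul_nonneg aE bga, mul_nonneg aE bE, mul_nonneg aE bZ, mul_nonneg aZ bga, mul_nonneg aZ bE, mul_nonneg aZ bZ, mul_nonneg aO bX, mul_nonneg aX3 bX]
  exact ⟨g1, g2, g3, om a.hE (by linarith [b.hE, b.hZ, b.hO]), om a.hZ b.hE, by nlinarith [mul_nonneg a.hO (by linarith [b.hE] : (0:ℤ) ≤ e), om a.hZ b.hZ], Or.inr g4⟩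

theorem jAD {r r' : ℕ} {E Z O e o : ℤ} (a : SA r E Z O) (b : SD r' e o) :
    SA (r + r' + 3) (E * (e + o)) (Z * e) (O * e) := by
  obtain ⟨i, j, s, t, X, Y, hi, hj, da, db, hv, hp⟩ := step 3 r r'
  have g1 : E * (e + o) + 2 * (Z * e) + O * e ≤ al (r + r' + 3) := by
    rcases a.cases da with ⟨rfl, rfl, rfl, rfl, rfl, rfl⟩ | ⟨rfl, as, aX, aX3, aal, ade, aga, aE, aZ, aO⟩ | ⟨rfl, as, aX, aX3, aal, ade, aga, aE, aZ, aO⟩ | ⟨rfl, as, aX, aX3, aal, ade, aga, aE, aZ, aO⟩ <;>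
    rcases b.cases db with ⟨rfl, bs, bX, bal, bx, bE, bO⟩ | ⟨rfl, bs, bX, bal, bx, bE, bO⟩ | ⟨rfl, bs, bX, bal, bx, bE, bO⟩ <;>
    norm_num [Val] at hv hp <;>
    rw [hv.1] <;>
    first
    | linarith
    | linarith [mul_nonneg ade bE, mul_nonneg aga bX, mul_nonneg aga bal, mul_nonneg aga bE, mul_nonneg aga bO, mul_nonneg aE bX, mul_nonneg aE bal, mul_nonneg aZ bx, mul_nonneg aZ bE, mul_nonneg aX3 bx, mul_nonneg aX3 bE]
  have g2 : 3 * (Z * e + O * e) ≤ de (r + r' + 3) := by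
    rcases a.cases da with ⟨rfl, rfl, rfl, rfl, rfl, rfl⟩ | ⟨rfl, as, aX, aX3, aal, ade, aga, aE, aZ, aO⟩ | ⟨rfl, as, aX, aX3, aal, ade, aga, aE, aZ, aO⟩ | ⟨rfl, as, aX, aX3, aal, ade, aga, aE, aZ, aO⟩ <;>
    rcases b.cases db with ⟨rfl, bs, bX, bal, bx, bE, bO⟩ | ⟨rfl, bs, bX, bal, bx, bE, bO⟩ | ⟨rfl, bs, bX, bal, bx, bE, bO⟩ <;>
    norm_num [Val] at hv hp <;>
    rw [hv.2.2.2] <;>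
    first
    | linarith
    | linarith [mul_nonneg ade bE, mul_nonneg aga bx, mul_nonneg aE bx, mul_nonneg aZ bx, mul_nonneg aX3 bE]
  have g3 : 3 * (E * (e + o) + Z * e) ≤ ga (r + r' + 3) := by
    rcases a.cases da with ⟨rfl, rfl, rfl, rfl, rfl, rfl⟩ | ⟨rfl, as, aX, aX3, aal, ade, aga, aE, aZ, aO⟩ | ⟨rfl, as, aX, aX3, aal, ade, aga, aE, aZ, aO⟩ | ⟨rfl, as, aX, aX3, aal, ade, aga, aE, aZ, aO⟩ <;>
    rcases b.cases db with ⟨rfl, bs, bX, bal, bx, bE, bO⟩ | ⟨rfl, bs, bX, bal, bx, bE, bO⟩ | ⟨rfl, bs, bX, bal, bx, bE, bO⟩ <;>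
    norm_num [Val] at hv hp <;>
    rw [hv.2.2.1] <;>
    first
    | linarith
    | linarith [mul_nonneg ade bal, mul_nonneg aga bs, mul_nonneg aga bX, mul_nonneg aga bE, mul_nonneg aga bO, mul_nonneg aE bs, mul_nonneg aE bX, mul_nonneg aZ bal, mul_nonneg aZ bx, mul_nonneg aZ bE, mul_nonneg aO bal]
  have g4 : E * (e + o) + 2 * (Z * e) ≤ bb (r + r' + 3) := by
    rcases a.cases da with ⟨rfl, rfl, rfl, rfl, rfl, rfl⟩ | ⟨rfl, as, aX, aX3, aal, ade, aga, aE, aZ, aO⟩ | ⟨rfl, as, aX, aX3, aal, ade, aga, aE, aZ, aO⟩ | ⟨rfl, as, aX, aX3, aal, ade, aga, aE, aZ, aO⟩ <;>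
    rcases b.cases db with ⟨rfl, bs, bX, bal, bx, bE, bO⟩ | ⟨rfl, bs, bX, bal, bx, bE, bO⟩ | ⟨rfl, bs, bX, bal, bx, bE, bO⟩ <;>
    norm_num [Val] at hv hp <;>
    rw [hv.2.1] <;>
    first
    | linarith
    | linarith [mul_nonneg ade bX, mul_nonneg aga bs, mul_nonneg aga bal, mul_nonneg aga bE, mul_nonneg aga bO, mul_nonneg aE bs, mul_nonneg aE bal, mul_nonneg aZ bx, mul_nonneg aZ bE, mul_nonneg aO bX, mul_nonneg aX3 bX]
  exact ⟨g1, g2, g3, om a.hE (by linarith [b.hE, b.hO]), om a.hZ b.hE, mul_nonneg a.hO (by linarith [b.hE]), Or.inr g4⟩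

theorem jBA {r r' : ℕ} {E Z O e z o : ℤ} (a : SB r E Z O) (b : SA r' e z o) :
    SD (r + r') (E * (z + o)) (O * e + Z * z) := by
  obtain ⟨i, j, s, t, X, Y, hi, hj, da, db, hv, hp⟩ := step 0 r r'
  rw [add_zero] at hv hp
  have g1 : E * (z + o) + (O * e + Z * z) ≤ al (r + r') := by
    rcases a.cases da with ⟨rfl, as, aX, aal, aga, aE, aZ, aO⟩ | ⟨rfl, as, aX, aal, aga, aE, aZ, aO⟩ | ⟨rfl, as, aX, aal, aga, aE, aZ, aO⟩ <;>
    rcases b.cases db with ⟨rfl, rfl, rfl, rfl, rfl, rfl⟩ | ⟨rfl, bs, bX, bX3, bal, bde, bga, bE, bZ, bO⟩ | ⟨rfl, bs, bX, bX3, bal, bde, bga, bE, bZ, bO⟩ | ⟨rfl, bs, bX, bX3, bal, bde, bga, bE, bZ, bO⟩ <;>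
    norm_num [Val] at hv hp <;>
    rw [hv.1] <;>
    first
    | linarith
    | linarith [mul_nonneg aX bZ, mul_nonneg aal bZ, mul_nonneg aga bde, mul_nonneg aga bO, mul_nonneg aga bX3, mul_nonneg aE bde, mul_nonneg aE bga, mul_nonneg aE bE, mul_nonneg aE bX3, mul_nonneg aO bga, mul_nonneg aO bZ, mul_nonneg aZ bga, mul_nonneg aZ bE, mul_nonneg aal bga, mul_nonneg aal bE, mul_nonneg aO bde, mul_nonneg aO bO]
  have g2 : E * (z + o) ≤ ph (r + r') := by
    rcases a.cases da with ⟨rfl, as, aX, aal, aga, aE, aZ, aO⟩ | ⟨rfl, as, aX, aal, aga, aE, aZ, aO⟩ | ⟨rfl, as, aX, aal, aga, aE, aZ, aO⟩ <;>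
    rcases b.cases db with ⟨rfl, rfl, rfl, rfl, rfl, rfl⟩ | ⟨rfl, bs, bX, bX3, bal, bde, bga, bE, bZ, bO⟩ | ⟨rfl, bs, bX, bX3, bal, bde, bga, bE, bZ, bO⟩ | ⟨rfl, bs, bX, bX3, bal, bde, bga, bE, bZ, bO⟩ <;>
    norm_num [Val] at hv hp <;>
    rw [hp] <;>
    first
    | linarith
    | linarith [mul_nonneg aga bde, mul_nonneg aga bZ, mul_nonneg aga bO, mul_nonneg aE bde, mul_nonneg aE bX3, mul_nonneg aO bX3]
  exact ⟨g1, g2, om a.hE (by linarith [b.hZ, b.hO]), by nlinarith [om a.hO b.hE, om a.hZ b.hZ]⟩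

theorem jBB {r r' : ℕ} {E Z O e z o : ℤ} (a : SB r E Z O) (b : SB r' e z o) :
    SD (r + r' + 1) (E * o) (O * e) := by
  obtain ⟨i, j, s, t, X, Y, hi, hj, da, db, hv, hp⟩ := step 1 r r'
  have g1 : E * o + O * e ≤ al (r + r' + 1) := by
    rcases a.cases da with ⟨rfl, as, aX, aal, aga, aE, aZ, aO⟩ | ⟨rfl, as, aX, aal, aga, aE, aZ, aO⟩ | ⟨rfl, as, aX, aal, aga, aE, aZ, aO⟩ <;>
    rcases b.cases db with ⟨rfl, bs, bX, bal, bga, bE, bZ, bO⟩ | ⟨rfl, bs, bX, bal, bga, bE, bZ, bO⟩ | ⟨rfl, bs, bX, bal, bga, bE, bZ, bO⟩ <;>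
    norm_num [Val] at hv hp <;>
    rw [hv.1] <;>
    first
    | linarith
    | linarith [mul_nonneg aga bga, mul_nonneg aga bE, mul_nonneg aga bO, mul_nonneg aE bga, mul_nonneg aE bE, mul_nonneg aO bga, mul_nonneg aO bO, mul_nonneg aE bO, mul_nonneg aO bE]
  have g2 : E * o ≤ ph (r + r' + 1) := by
    rcases a.cases da with ⟨rfl, as, aX, aal, aga, aE, aZ, aO⟩ | ⟨rfl, as, aX, aal, aga, aE, aZ, aO⟩ | ⟨rfl, as, aX, aal, aga, aE, aZ, aO⟩ <;>
    rcases b.cases db with ⟨rfl, bs, bX, bal, bga, bE, bZ, bO⟩ | ⟨rfl, bs, bX, bal, bga, bE, bZ, bO⟩ | ⟨rfl, bs, bX, bal, bga, bE, bZ, bO⟩ <;>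
    norm_num [Val] at hv hp <;>
    rw [hp] <;>
    first
    | linarith
    | linarith [mul_nonneg aE bga, mul_nonneg aE bE, mul_nonneg aO bga, mul_nonneg aO bE, mul_nonneg aO bO, mul_nonneg as bX, mul_nonneg as bs, mul_nonneg aX bX, mul_nonneg aX bs, mul_nonneg aga bX, mul_nonneg aga bs]
  exact ⟨g1, g2, om a.hE b.hO, by nlinarith [om a.hO b.hE]⟩

theorem jBD {r r' : ℕ} {E Z O e o : ℤ} (a : SB r E Z O) (b : SD r' e o) :
    SB (r + r' + 3) (E * (e + o)) (Z * e) (O * e) := by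
  obtain ⟨i, j, s, t, X, Y, hi, hj, da, db, hv, hp⟩ := step 3 r r'
  have g1 : E * (e + o) + Z * e + O * e ≤ al (r + r' + 3) := by
    rcases a.cases da with ⟨rfl, as, aX, aal, aga, aE, aZ, aO⟩ | ⟨rfl, as, aX, aal, aga, aE, aZ, aO⟩ | ⟨rfl, as, aX, aal, aga, aE, aZ, aO⟩ <;>
    rcases b.cases db with ⟨rfl, bs, bX, bal, bx, bE, bO⟩ | ⟨rfl, bs, bX, bal, bx, bE, bO⟩ | ⟨rfl, bs, bX, bal, bx, bE, bO⟩ <;>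
    norm_num [Val] at hv hp <;>
    rw [hv.1] <;>
    first
    | linarith
    | linarith [mul_nonneg as bX, mul_nonneg as bal, mul_nonneg aX bX, mul_nonneg aX bal, mul_nonneg aX bx, mul_nonneg aX bE, mul_nonneg aal bX, mul_nonneg aal bal, mul_nonneg aal bE, mul_nonneg aal bO, mul_nonneg aga bs, mul_nonneg aga bX, mul_nonneg aga bO, mul_nonneg aE bx, mul_nonneg aE bE, mul_nonneg aZ bx, mul_nonneg aO bx, mul_nonneg aO bE, mul_nonneg aO bO]
  have g2 : 3 * (E * (e + o) + O * e) ≤ ga (r + r' + 3) := by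
    rcases a.cases da with ⟨rfl, as, aX, aal, aga, aE, aZ, aO⟩ | ⟨rfl, as, aX, aal, aga, aE, aZ, aO⟩ | ⟨rfl, as, aX, aal, aga, aE, aZ, aO⟩ <;>
    rcases b.cases db with ⟨rfl, bs, bX, bal, bx, bE, bO⟩ | ⟨rfl, bs, bX, bal, bx, bE, bO⟩ | ⟨rfl, bs, bX, bal, bx, bE, bO⟩ <;>
    norm_num [Val] at hv hp <;>
    rw [hv.2.2.1] <;>
    first
    | linarith
    | linarith [mul_nonneg as bx, mul_nonneg as bE, mul_nonneg aX bx, mul_nonneg aX bE, mul_nonneg aga bX, mul_nonneg aga bal, mul_nonneg aga bE, mul_nonneg aga bO, mul_nonneg aE bX, mul_nonneg aE bal, mul_nonneg aO bx, mul_nonneg aO bE]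
  exact ⟨g1, g2, om a.hE (by linarith [b.hE, b.hO]), om a.hZ b.hE, om a.hO b.hE⟩

theorem jCA {r r' : ℕ} {E Z O e z o : ℤ} (a : SC r E Z O) (b : SA r' e z o) :
    SD (r + r' + 1) (E * (z + o)) (Z * z) := by
  obtain ⟨i, j, s, t, X, Y, hi, hj, da, db, hv, hp⟩ := step 1 r r'
  have g1 : E * (z + o) + Z * z ≤ al (r + r' + 1) := by
    rcases a.cases da with ⟨rfl, as, aX, aal, aga, aE, aZ, aO⟩ | ⟨rfl, as, aX, aal, aga, aE, aZ, aO⟩ | ⟨rfl, as, aX, aal, aga, aE, aZ, aO⟩ <;>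
    rcases b.cases db with ⟨rfl, rfl, rfl, rfl, rfl, rfl⟩ | ⟨rfl, bs, bX, bX3, bal, bde, bga, bE, bZ, bO⟩ | ⟨rfl, bs, bX, bX3, bal, bde, bga, bE, bZ, bO⟩ | ⟨rfl, bs, bX, bX3, bal, bde, bga, bE, bZ, bO⟩ <;>
    norm_num [Val] at hv hp <;>
    rw [hv.1] <;>
    first
    | linarith
    | linarith [mul_nonneg aE bde, mul_nonneg aZ bga, mul_nonneg aZ bE, mul_nonneg aga bde, mul_nonneg aga bZ, mul_nonneg aga bO, mul_nonneg aE bX3, mul_nonneg aZ bX3]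
  have g2 : E * (z + o) ≤ ph (r + r' + 1) := by
    rcases a.cases da with ⟨rfl, as, aX, aal, aga, aE, aZ, aO⟩ | ⟨rfl, as, aX, aal, aga, aE, aZ, aO⟩ | ⟨rfl, as, aX, aal, aga, aE, aZ, aO⟩ <;>
    rcases b.cases db with ⟨rfl, rfl, rfl, rfl, rfl, rfl⟩ | ⟨rfl, bs, bX, bX3, bal, bde, bga, bE, bZ, bO⟩ | ⟨rfl, bs, bX, bX3, bal, bde, bga, bE, bZ, bO⟩ | ⟨rfl, bs, bX, bX3, bal, bde, bga, bE, bZ, bO⟩ <;>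
    norm_num [Val] at hv hp <;>
    rw [hp] <;>
    first
    | linarith
    | linarith [mul_nonneg aga bga, mul_nonneg aga bE, mul_nonneg aga bZ, mul_nonneg aE bde, mul_nonneg aE bX3, mul_nonneg aZ bX3]
  exact ⟨g1, g2, om a.hE (by linarith [b.hZ, b.hO]), by nlinarith [om a.hZ b.hZ]⟩

theorem jCB {r r' : ℕ} {E Z O e z o : ℤ} (a : SC r E Z O) (b : SB r' e z o) :
    SD (r + r' + 2) (E * o) (0) := by
  obtain ⟨i, j, s, t, X, Y, hi, hj, da, db, hv, hp⟩ := step 2 r r'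
  have g2 : E * o ≤ ph (r + r' + 2) := by
    rcases a.cases da with ⟨rfl, as, aX, aal, aga, aE, aZ, aO⟩ | ⟨rfl, as, aX, aal, aga, aE, aZ, aO⟩ | ⟨rfl, as, aX, aal, aga, aE, aZ, aO⟩ <;>
    rcases b.cases db with ⟨rfl, bs, bX, bal, bga, bE, bZ, bO⟩ | ⟨rfl, bs, bX, bal, bga, bE, bZ, bO⟩ | ⟨rfl, bs, bX, bal, bga, bE, bZ, bO⟩ <;>
    norm_num [Val] at hv hp <;>
    rw [hp] <;>
    first
    | linarith
    | linarith [mul_nonneg aga bE, mul_nonneg aga bO, mul_nonneg aE bE, mul_nonneg aZ bE, mul_nonneg aZ bO, mul_nonneg aga bga, mul_nonneg aE bX, mul_nonneg aE bga, mul_nonneg aE bs, mul_nonneg aZ bga]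
  exact ⟨by linarith [ph_le_al (r + r' + 2)], g2, om a.hE b.hO, le_refl _⟩

theorem jCC {r r' : ℕ} {E Z O e z o : ℤ} (a : SC r E Z O) (b : SC r' e z o) :
    SC (r + r' + 3) (E * (e + z + o)) (Z * e) (O * e + Z * z) := by
  obtain ⟨i, j, s, t, X, Y, hi, hj, da, db, hv, hp⟩ := step 3 r r'
  have g1 : E * (e + z + o) + Z * e + (O * e + Z * z) ≤ al (r + r' + 3) := by
    rcases a.cases da with ⟨rfl, as, aX, aal, aga, aE, aZ, aO⟩ | ⟨rfl, as, aX, aal, aga, aE, aZ, aO⟩ | ⟨rfl, as, aX, aal, aga, aE, aZ, aO⟩ <;>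
    rcases b.cases db with ⟨rfl, bs, bX, bal, bga, bE, bZ, bO⟩ | ⟨rfl, bs, bX, bal, bga, bE, bZ, bO⟩ | ⟨rfl, bs, bX, bal, bga, bE, bZ, bO⟩ <;>
    norm_num [Val] at hv hp <;>
    rw [hv.1] <;>
    first
    | linarith
    | linarith [mul_nonneg as bga, mul_nonneg aX bga, mul_nonneg aX bE, mul_nonneg aal bE, mul_nonneg aga bga, mul_nonneg aga bE, mul_nonneg aga bZ, mul_nonneg aE bX, mul_nonneg aE bal, mul_nonneg aE bE, mul_nonneg aE bZ, mul_nonneg aZ bga, mul_nonneg aZ bE, mul_nonneg aZ bZ]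
  have g2 : 3 * (E * (e + z + o) + Z * e) ≤ ga (r + r' + 3) := by
    rcases a.cases da with ⟨rfl, as, aX, aal, aga, aE, aZ, aO⟩ | ⟨rfl, as, aX, aal, aga, aE, aZ, aO⟩ | ⟨rfl, as, aX, aal, aga, aE, aZ, aO⟩ <;>
    rcases b.cases db with ⟨rfl, bs, bX, bal, bga, bE, bZ, bO⟩ | ⟨rfl, bs, bX, bal, bga, bE, bZ, bO⟩ | ⟨rfl, bs, bX, bal, bga, bE, bZ, bO⟩ <;>
    norm_num [Val] at hv hp <;>
    rw [hv.2.2.1] <;>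
    first
    | linarith
    | linarith [mul_nonneg as bZ, mul_nonneg aX bZ, mul_nonneg aga bga, mul_nonneg aga bE, mul_nonneg aga bZ, mul_nonneg aE bX, mul_nonneg aE bal, mul_nonneg aE bga, mul_nonneg aE bE, mul_nonneg aZ bga, mul_nonneg aZ bE, mul_nonneg aZ bZ]
  exact ⟨g1, g2, om a.hE (by linarith [b.hE, b.hZ, b.hO]), om a.hZ b.hE, by nlinarith [om a.hO b.hE, om a.hZ b.hZ]⟩

theorem jCD {r r' : ℕ} {E Z O e o : ℤ} (a : SC r E Z O) (b : SD r' e o) :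
    SC (r + r' + 3) (E * (e + o)) (Z * e) (O * e) := by
  obtain ⟨i, j, s, t, X, Y, hi, hj, da, db, hv, hp⟩ := step 3 r r'
  have g1 : E * (e + o) + Z * e + O * e ≤ al (r + r' + 3) := by
    rcases a.cases da with ⟨rfl, as, aX, aal, aga, aE, aZ, aO⟩ | ⟨rfl, as, aX, aal, aga, aE, aZ, aO⟩ | ⟨rfl, as, aX, aal, aga, aE, aZ, aO⟩ <;>
    rcases b.cases db with ⟨rfl, bs, bX, bal, bx, bE, bO⟩ | ⟨rfl, bs, bX, bal, bx, bE, bO⟩ | ⟨rfl, bs, bX, bal, bx, bE, bO⟩ <;>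
    norm_num [Val] at hv hp <;>
    rw [hv.1] <;>
    first
    | linarith
    | linarith [mul_nonneg as bX, mul_nonneg as bal, mul_nonneg aX bX, mul_nonneg aX bal, mul_nonneg aX bx, mul_nonneg aX bE, mul_nonneg aal bX, mul_nonneg aal bal, mul_nonneg aal bE, mul_nonneg aal bO, mul_nonneg aga bs, mul_nonneg aga bX, mul_nonneg aga bO, mul_nonneg aE bx, mul_nonneg aE bE, mul_nonneg aZ bx, mul_nonneg aZ bE, mul_nonneg aZ bO, mul_nonneg aO bx]
  have g2 : 3 * (E * (e + o) + Z * e) ≤ ga (r + r' + 3) := by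
    rcases a.cases da with ⟨rfl, as, aX, aal, aga, aE, aZ, aO⟩ | ⟨rfl, as, aX, aal, aga, aE, aZ, aO⟩ | ⟨rfl, as, aX, aal, aga, aE, aZ, aO⟩ <;>
    rcases b.cases db with ⟨rfl, bs, bX, bal, bx, bE, bO⟩ | ⟨rfl, bs, bX, bal, bx, bE, bO⟩ | ⟨rfl, bs, bX, bal, bx, bE, bO⟩ <;>
    norm_num [Val] at hv hp <;>
    rw [hv.2.2.1] <;>
    first
    | linarith
    | linarith [mul_nonneg aga bx, mul_nonneg aga bE, mul_nonneg aE bX, mul_nonneg aE bal, mul_nonneg aE bx, mul_nonneg aE bE, mul_nonneg aZ bx, mul_nonneg aZ bE]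
  exact ⟨g1, g2, om a.hE (by linarith [b.hE, b.hO]), om a.hZ b.hE, om a.hO b.hE⟩

theorem jDA {r r' : ℕ} {E O e z o : ℤ} (a : SD r E O) (b : SA r' e z o) :
    SD (r + r' + 1) (E * (z + o)) (0) := by
  obtain ⟨i, j, s, t, X, Y, hi, hj, da, db, hv, hp⟩ := step 1 r r'
  have g2 : E * (z + o) ≤ ph (r + r' + 1) := by
    rcases a.cases da with ⟨rfl, as, aX, aal, ax, aE, aO⟩ | ⟨rfl, as, aX, aal, ax, aE, aO⟩ | ⟨rfl, as, aX, aal, ax, aE, aO⟩ <;>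
    rcases b.cases db with ⟨rfl, rfl, rfl, rfl, rfl, rfl⟩ | ⟨rfl, bs, bX, bX3, bal, bde, bga, bE, bZ, bO⟩ | ⟨rfl, bs, bX, bX3, bal, bde, bga, bE, bZ, bO⟩ | ⟨rfl, bs, bX, bX3, bal, bde, bga, bE, bZ, bO⟩ <;>
    norm_num [Val] at hv hp <;>
    rw [hp] <;>
    first
    | linarith
    | linarith [mul_nonneg ax bX3, mul_nonneg aE bde, mul_nonneg aE bX3]
  exact ⟨by linarith [ph_le_al (r + r' + 1)], g2, om a.hE (by linarith [b.hZ, b.hO]), le_refl _⟩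

theorem jDB {r r' : ℕ} {E O e z o : ℤ} (a : SD r E O) (b : SB r' e z o) :
    SD (r + r' + 2) (E * o) (0) := by
  obtain ⟨i, j, s, t, X, Y, hi, hj, da, db, hv, hp⟩ := step 2 r r'
  have g2 : E * o ≤ ph (r + r' + 2) := by
    rcases a.cases da with ⟨rfl, as, aX, aal, ax, aE, aO⟩ | ⟨rfl, as, aX, aal, ax, aE, aO⟩ | ⟨rfl, as, aX, aal, ax, aE, aO⟩ <;>
    rcases b.cases db with ⟨rfl, bs, bX, bal, bga, bE, bZ, bO⟩ | ⟨rfl, bs, bX, bal, bga, bE, bZ, bO⟩ | ⟨rfl, bs, bX, bal, bga, bE, bZ, bO⟩ <;>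
    norm_num [Val] at hv hp <;>
    rw [hp] <;>
    first
    | linarith
    | linarith [mul_nonneg ax bga, mul_nonneg ax bE, mul_nonneg ax bO, mul_nonneg aE bga, mul_nonneg aE bE, mul_nonneg aE bX, mul_nonneg aE bs]
  exact ⟨by linarith [ph_le_al (r + r' + 2)], g2, om a.hE b.hO, le_refl _⟩

theorem jDD {r r' : ℕ} {E O e o : ℤ} (a : SD r E O) (b : SD r' e o) :
    SD (r + r' + 3) (E * (e + o)) (O * e) := by
  obtain ⟨i, j, s, t, X, Y, hi, hj, da, db, hv, hp⟩ := step 3 r r'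
  have g1 : E * (e + o) + O * e ≤ al (r + r' + 3) := by
    rcases a.cases da with ⟨rfl, as, aX, aal, ax, aE, aO⟩ | ⟨rfl, as, aX, aal, ax, aE, aO⟩ | ⟨rfl, as, aX, aal, ax, aE, aO⟩ <;>
    rcases b.cases db with ⟨rfl, bs, bX, bal, bx, bE, bO⟩ | ⟨rfl, bs, bX, bal, bx, bE, bO⟩ | ⟨rfl, bs, bX, bal, bx, bE, bO⟩ <;>
    norm_num [Val] at hv hp <;>
    rw [hv.1] <;>
    first
    | linarith
    | linarith [mul_nonneg aX bal, mul_nonneg aX bx, mul_nonneg aX bE, mul_nonneg aal bal, mul_nonneg aal bx, mul_nonneg aal bE, mul_nonneg ax bX, mul_nonneg ax bE, mul_nonneg ax bO, mul_nonneg aE bX, mul_nonneg aE bE, mul_nonneg aO bx, mul_nonneg as bx, mul_nonneg aE bal, mul_nonneg aO bal]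
  have g2 : E * (e + o) ≤ ph (r + r' + 3) := by
    rcases a.cases da with ⟨rfl, as, aX, aal, ax, aE, aO⟩ | ⟨rfl, as, aX, aal, ax, aE, aO⟩ | ⟨rfl, as, aX, aal, ax, aE, aO⟩ <;>
    rcases b.cases db with ⟨rfl, bs, bX, bal, bx, bE, bO⟩ | ⟨rfl, bs, bX, bal, bx, bE, bO⟩ | ⟨rfl, bs, bX, bal, bx, bE, bO⟩ <;>
    norm_num [Val] at hv hp <;>
    rw [hp] <;>
    first
    | linarith
    | linarith [mul_nonneg as bX, mul_nonneg aX bX, mul_nonneg ax bs, mul_nonneg ax bX, mul_nonneg aE bal, mul_nonneg aE bx, mul_nonneg aE bE]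
  exact ⟨g1, g2, om a.hE (by linarith [b.hE, b.hO]), mul_nonneg a.hO (by linarith [b.hE])⟩

theorem SC.toD {r : ℕ} {E Z O : ℤ} (a : SC r E Z O) : SD r E (Z + O) := by
  obtain ⟨i, j, s, t, X, Y, hi, hj, da, db, hv, hp⟩ := step 0 r 0
  refine ⟨by linarith [a.h1], ?_, a.hE, by linarith [a.hZ, a.hO]⟩
  rw [da.p]
  rcases a.cases da with ⟨rfl, as, aX, aal, aga, aE, aZ, aO⟩ |
    ⟨rfl, as, aX, aal, aga, aE, aZ, aO⟩ | ⟨rfl, as, aX, aal, aga, aE, aZ, aO⟩ <;> linarith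

/-! ### Polynomials with known leading coefficient -/

/-- `p` has degree at most `d` and its coefficient at `d` is `c` -/
def top (p : Polynomial ℤ) (d : ℕ) (c : ℤ) : Prop := p.natDegree ≤ d ∧ p.coeff d = c

theorem top.mul {p q : Polynomial ℤ} {d e : ℕ} {a b : ℤ} (h : top p d a) (h' : top q e b) :
    top (p * q) (d + e) (a * b) := by
  refine ⟨Polynomial.natDegree_mul_le_of_le h.1 h'.1, ?_⟩
  rw [Polynomial.coeff_mul_add_eq_of_natDegree_le h.1 h'.1, h.2, h'.2]

theorem top.add {p q : Polynomial ℤ} {d : ℕ} {a b : ℤ} (h : top p d a) (h' : top q d b) :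
    top (p + q) d (a + b) := by
  refine ⟨Polynomial.natDegree_add_le_of_degree_le h.1 h'.1, ?_⟩
  rw [Polynomial.coeff_add, h.2, h'.2]

theorem top.up {p : Polynomial ℤ} {d e : ℕ} {a : ℤ} (h : top p d a) (he : d < e) :
    top p e 0 :=
  ⟨h.1.trans he.le, Polynomial.coeff_eq_zero_of_natDegree_lt (h.1.trans_lt he)⟩

theorem top.cast {p : Polynomial ℤ} {d e : ℕ} {a b : ℤ} (h : top p d a) (he : d = e)
    (hb : a = b) : top p e b := by subst he; subst hb; exact h

/-- the invariant satisfied by rooted trees of order `N` -/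
def St (N : ℕ) (p q s : Polynomial ℤ) : Prop :=
  (∃ D r E Z O, N = r + 1 ∧ top p D E ∧ top q (D + 1) Z ∧ top s (D + 1) O ∧ SA r E Z O) ∨
  (∃ D r E Z O, N = r + 2 ∧ top p D E ∧ top q D Z ∧ top s (D + 1) O ∧ SB r E Z O) ∨
  (∃ D r E Z O, N = r + 3 ∧ top p D E ∧ top q D Z ∧ top s D O ∧ SC r E Z O) ∨
  (∃ D r E O, N = r + 3 ∧ top p D E ∧ top q D 0 ∧ top s D O ∧ SD r E O)

theorem St.join {N N' : ℕ} {p q s p' q' s' : Polynomial ℤ} (h : St N p q s)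
    (h' : St N' p' q' s') :
    St (N + N') (p * (p' + q' + s')) (q * p') (s * p' + q * q') := by
  rcases h with ⟨D, r, E, Z, O, hN, hp, hq, hs, a⟩ | ⟨D, r, E, Z, O, hN, hp, hq, hs, a⟩ |
    ⟨D, r, E, Z, O, hN, hp, hq, hs, a⟩ | ⟨D, r, E, O, hN, hp, hq, hs, a⟩ <;>
  rcases h' with ⟨D', r', e, z, o, hN', hp', hq', hs', b⟩ |
    ⟨D', r', e, z, o, hN', hp', hq', hs', b⟩ |
    ⟨D', r', e, z, o, hN', hp', hq', hs', b⟩ | ⟨D', r', e, o, hN', hp', hq', hs', b⟩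
  · have t := ((hp'.up (Nat.lt_succ_self _)).add hq').add hs'
    refine Or.inr (Or.inl ⟨D + D' + 1, _, _, _, _, by omega, (hp.mul t).cast (by omega) (by ring),
      (hq.mul hp').cast (by omega) rfl, (((hs.mul hp').up (by omega)).add
      ((hq.mul hq').cast (by omega) rfl)).cast rfl (by ring), jAA a b⟩)
  · have t := ((hp'.up (Nat.lt_succ_self _)).add (hq'.up (Nat.lt_succ_self _))).add hs'
    refine Or.inr (Or.inr (Or.inl ⟨D + D' + 1, _, _, _, _, by omega,
      (hp.mul t).cast (by omega) (by ring),
      (hq.mul hp').cast (by omega) rfl, ((hs.mul hp').add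
      (hq.mul hq')).cast (by omega) (by ring), jAB a b⟩))
  · have t := (hp'.add hq').add hs'
    refine Or.inl ⟨D + D', _, _, _, _, by omega, (hp.mul t).cast (by omega) (by ring),
      (hq.mul hp').cast (by omega) rfl, ((hs.mul hp').add
      (hq.mul hq')).cast (by omega) (by ring), jAC a b⟩
  · have t := (hp'.add hq').add hs'
    refine Or.inl ⟨D + D', _, _, _, _, by omega, (hp.mul t).cast (by omega) (by ring),
      (hq.mul hp').cast (by omega) rfl, ((hs.mul hp').add
      (hq.mul hq')).cast (by omega) (by ring), jAD a b⟩
  · have t := ((hp'.up (Nat.lt_succ_self _)).add hq').add hs'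
    refine Or.inr (Or.inr (Or.inr ⟨D + D' + 1, _, _, _, by omega,
      (hp.mul t).cast (by omega) (by ring),
      (hq.mul hp').up (by omega), (((hs.mul hp').cast (by omega) rfl).add
      ((hq.mul hq').cast (by omega) rfl)).cast rfl (by ring), jBA a b⟩))
  · have t := ((hp'.up (Nat.lt_succ_self _)).add (hq'.up (Nat.lt_succ_self _))).add hs'
    refine Or.inr (Or.inr (Or.inr ⟨D + D' + 1, _, _, _, by omega,
      (hp.mul t).cast (by omega) (by ring),
      (hq.mul hp').up (by omega), (((hs.mul hp').cast (by omega) rfl).add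
      ((hq.mul hq').up (by omega))).cast rfl (by ring), jBB a b⟩))
  · have t := (hp'.add hq').add hs'
    refine Or.inr (Or.inl ⟨D + D', _, _, _, _, by omega, (hp.mul t).cast (by omega) (by ring),
      (hq.mul hp').cast (by omega) rfl, (((hs.mul hp').cast (by omega) rfl).add
      ((hq.mul hq').up (by omega))).cast rfl (by ring), jBD a b.toD⟩)
  · have t := (hp'.add hq').add hs'
    refine Or.inr (Or.inl ⟨D + D', _, _, _, _, by omega, (hp.mul t).cast (by omega) (by ring),
      (hq.mul hp').cast (by omega) rfl, (((hs.mul hp').cast (by omega) rfl).add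
      ((hq.mul hq').up (by omega))).cast rfl (by ring), jBD a b⟩)
  · have t := ((hp'.up (Nat.lt_succ_self _)).add hq').add hs'
    refine Or.inr (Or.inr (Or.inr ⟨D + D' + 1, _, _, _, by omega,
      (hp.mul t).cast (by omega) (by ring),
      (hq.mul hp').up (by omega), (((hs.mul hp').up (by omega)).add
      ((hq.mul hq').cast (by omega) rfl)).cast rfl (by ring), jCA a b⟩))
  · have t := ((hp'.up (Nat.lt_succ_self _)).add (hq'.up (Nat.lt_succ_self _))).add hs'
    refine Or.inr (Or.inr (Or.inr ⟨D + D' + 1, _, _, _, by omega,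
      (hp.mul t).cast (by omega) (by ring),
      (hq.mul hp').up (by omega), (((hs.mul hp').up (by omega)).add
      ((hq.mul hq').up (by omega))).cast rfl (by ring), jCB a b⟩))
  · have t := (hp'.add hq').add hs'
    refine Or.inr (Or.inr (Or.inl ⟨D + D', _, _, _, _, by omega,
      (hp.mul t).cast (by omega) (by ring),
      (hq.mul hp').cast (by omega) rfl, ((hs.mul hp').add
      (hq.mul hq')).cast (by omega) (by ring), jCC a b⟩))
  · have t := (hp'.add hq').add hs'
    refine Or.inr (Or.inr (Or.inl ⟨D + D', _, _, _, _, by omega,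
      (hp.mul t).cast (by omega) (by ring),
      (hq.mul hp').cast (by omega) rfl, ((hs.mul hp').add
      (hq.mul hq')).cast (by omega) (by ring), jCD a b⟩))
  · have t := ((hp'.up (Nat.lt_succ_self _)).add hq').add hs'
    refine Or.inr (Or.inr (Or.inr ⟨D + D' + 1, _, _, _, by omega,
      (hp.mul t).cast (by omega) (by ring),
      (hq.mul hp').up (by omega), (((hs.mul hp').up (by omega)).add
      ((hq.mul hq').cast (by omega) rfl)).cast rfl (by ring), jDA a b⟩))
  · have t := ((hp'.up (Nat.lt_succ_self _)).add (hq'.up (Nat.lt_succ_self _))).add hs'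
    refine Or.inr (Or.inr (Or.inr ⟨D + D' + 1, _, _, _, by omega,
      (hp.mul t).cast (by omega) (by ring),
      (hq.mul hp').up (by omega), (((hs.mul hp').up (by omega)).add
      ((hq.mul hq').up (by omega))).cast rfl (by ring), jDB a b⟩))
  · have t := (hp'.add hq').add hs'
    refine Or.inr (Or.inr (Or.inr ⟨D + D', _, _, _, by omega,
      (hp.mul t).cast (by omega) (by ring),
      (hq.mul hp').cast (by omega) (by ring), ((hs.mul hp').add
      (hq.mul hq')).cast (by omega) (by ring), jDD a b.toD⟩))
  · have t := (hp'.add hq').add hs'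
    refine Or.inr (Or.inr (Or.inr ⟨D + D', _, _, _, by omega,
      (hp.mul t).cast (by omega) (by ring),
      (hq.mul hp').cast (by omega) (by ring), ((hs.mul hp').add
      (hq.mul hq')).cast (by omega) (by ring), jDD a b⟩))

theorem St.single : St 1 1 Polynomial.X 0 := by
  refine Or.inl ⟨0, 0, 1, 1, 0, rfl, ⟨by simp, by simp⟩, ⟨by simp, by simp⟩,
    ⟨by simp, by simp⟩, ?_⟩
  constructor <;> simp [al, de, ga]

/-- what we need about the tree attached to the cycle -/
theorem St.goal {f : ℕ} {p q s : Polynomial ℤ} (h : St (f + 1) p q s) (hf : 1 ≤ f) :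
    ∃ (D : ℕ) (E Z : ℤ), top p D E ∧ top q (D + 1) Z ∧ 1 ≤ E ∧ E + 2 * Z ≤ bb f := by
  rcases h with ⟨D, r, E, Z, O, hN, hp, hq, hs, a⟩ | ⟨D, r, E, Z, O, hN, hp, hq, hs, a⟩ |
    ⟨D, r, E, Z, O, hN, hp, hq, hs, a⟩ | ⟨D, r, E, O, hN, hp, hq, hs, a⟩
  · obtain rfl : f = r := by omega
    exact ⟨D, E, Z, hp, hq, a.hE, a.hb.resolve_left (by omega)⟩
  · refine ⟨D, E, 0, hp, hq.up (by omega), a.hE, ?_⟩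
    obtain rfl : f = r + 1 := by omega
    have h3 := a.h3
    have hO := a.hO
    obtain ⟨t, i, rfl, hi⟩ : ∃ t i, r = 3 * t + i ∧ i < 3 := ⟨r / 3, r % 3, by omega, by omega⟩
    have hX := pow_ge t
    unfold ga at h3
    unfold bb
    interval_cases i
    · rw [show (3 * t + 0) % 3 = 0 by omega, show (3 * t + 0) / 3 = t by omega] at h3
      rw [show (3 * t + 0 + 1) % 3 = 1 by omega, show (3 * t + 0 + 1) / 3 = t by omega]
      norm_num at h3 ⊢; linarith
    · rw [show (3 * t + 1) % 3 = 1 by omega, show (3 * t + 1) / 3 = t by omega] at h3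
      rw [show (3 * t + 1 + 1) % 3 = 2 by omega, show (3 * t + 1 + 1) / 3 = t by omega]
      norm_num at h3 ⊢; linarith
    · rw [show (3 * t + 2) % 3 = 2 by omega, show (3 * t + 2) / 3 = t by omega] at h3
      rw [show (3 * t + 2 + 1) % 3 = 0 by omega, show (3 * t + 2 + 1) / 3 = t + 1 by omega]
      rw [pow_succ]
      norm_num at h3 ⊢; linarith
  · refine ⟨D, E, 0, hp, hq.up (by omega), a.hE, ?_⟩
    obtain rfl : f = r + 2 := by omega
    have h3 := a.h3
    have hO := a.hZ
    obtain ⟨t, i, rfl, hi⟩ : ∃ t i, r = 3 * t + i ∧ i < 3 := ⟨r / 3, r % 3, by omega, by omega⟩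
    have hX := pow_ge t
    unfold ga at h3
    unfold bb
    interval_cases i
    · rw [show (3 * t + 0) % 3 = 0 by omega, show (3 * t + 0) / 3 = t by omega] at h3
      rw [show (3 * t + 0 + 2) % 3 = 2 by omega, show (3 * t + 0 + 2) / 3 = t by omega]
      norm_num at h3 ⊢; linarith
    · rw [show (3 * t + 1) % 3 = 1 by omega, show (3 * t + 1) / 3 = t by omega] at h3
      rw [show (3 * t + 1 + 2) % 3 = 0 by omega, show (3 * t + 1 + 2) / 3 = t + 1 by omega]
      rw [pow_succ]
      norm_num at h3 ⊢; linarith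
    · rw [show (3 * t + 2) % 3 = 2 by omega, show (3 * t + 2) / 3 = t by omega] at h3
      rw [show (3 * t + 2 + 2) % 3 = 1 by omega, show (3 * t + 2 + 2) / 3 = t + 1 by omega]
      rw [pow_succ]
      norm_num at h3 ⊢; linarith
  · refine ⟨D, E, 0, hp, hq.up (by omega), a.hE, ?_⟩
    obtain rfl : f = r + 2 := by omega
    have h2 := a.h2
    have h5 : (3 : ℤ) ^ (r / 3) ≤ 3 ^ ((r + 2) / 3) := by gcongr <;> omega
    unfold ph at h2
    unfold bb
    split_ifs <;> push_cast <;> omega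

/-! ### Generating polynomials of families of dissociation sets -/

theorem nbrCount_eq (G : SimpleGraph V) (s : Finset V) (v : V) :
    nbrCount G s v = (s.filter (G.Adj v)).card := by
  unfold nbrCount
  rw [← Set.ncard_coe_finset]
  congr 1
  ext x
  simp

theorem nbrCount_mono (G : SimpleGraph V) {s t : Finset V} (h : s ⊆ t) (v : V) :
    nbrCount G s v ≤ nbrCount G t v := by
  rw [nbrCount_eq, nbrCount_eq]
  exact Finset.card_le_card (Finset.filter_subset_filter _ h)

theorem IsDissoc.mono {G : SimpleGraph V} {s t : Finset V} (ht : IsDissoc G t) (h : s ⊆ t) :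
    IsDissoc G s := fun v hv => (nbrCount_mono G h v).trans (ht v (h hv))

/-- the generating polynomial of the subsets of `A` satisfying `P` -/
noncomputable def gp (A : Finset V) (P : Finset V → Prop) : Polynomial ℤ :=
  ∑ S ∈ A.powerset, if P S then Polynomial.X ^ S.card else 0

/-- dissociation sets avoiding `w` -/
def PE (G : SimpleGraph V) (w : V) (S : Finset V) : Prop := IsDissoc G S ∧ w ∉ S
/-- dissociation sets containing `w` as an isolated vertex -/
def PZ (G : SimpleGraph V) (w : V) (S : Finset V) : Prop :=
  IsDissoc G S ∧ w ∈ S ∧ nbrCount G S w = 0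
/-- dissociation sets containing `w` with degree one -/
def PO (G : SimpleGraph V) (w : V) (S : Finset V) : Prop :=
  IsDissoc G S ∧ w ∈ S ∧ nbrCount G S w = 1

theorem gp_union (A B : Finset V) (h : Disjoint A B) (P : Finset V → Prop) :
    gp (A ∪ B) P = ∑ S ∈ A.powerset, ∑ T ∈ B.powerset,
      if P (S ∪ T) then Polynomial.X ^ S.card * Polynomial.X ^ T.card else 0 := by
  unfold gp
  rw [← Finset.sum_product']
  have hd : ∀ a, a ∈ A → a ∉ B := fun a ha hb => Finset.disjoint_left.mp h ha hb
  refine Finset.sum_bij' (fun U _ => (U ∩ A, U ∩ B)) (fun p _ => p.1 ∪ p.2) ?_ ?_ ?_ ?_ ?_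
  · intro U _
    simp
  · intro p hp
    simp only [Finset.mem_product, Finset.mem_powerset] at hp ⊢
    exact Finset.union_subset_union hp.1 hp.2
  · intro U hU
    simp only [Finset.mem_powerset] at hU
    simp only [← Finset.inter_union_distrib_left]
    exact Finset.inter_eq_left.mpr hU
  · rintro ⟨S, T⟩ hp
    simp only [Finset.mem_product, Finset.mem_powerset] at hp
    simp only [Prod.mk.injEq]
    constructor
    · ext a
      have := @hp.1 a
      have := @hp.2 a
      have := hd a
      simp only [Finset.mem_inter, Finset.mem_union]
      tauto
    · ext a
      have := @hp.1 a
      have := @hp.2 a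
      have := hd a
      simp only [Finset.mem_inter, Finset.mem_union]
      tauto
  · intro U hU
    simp only [Finset.mem_powerset] at hU
    have h1 : U ∩ A ∪ U ∩ B = U := by
      rw [← Finset.inter_union_distrib_left]
      exact Finset.inter_eq_left.mpr hU
    have h2 : U.card = (U ∩ A).card + (U ∩ B).card := by
      rw [← Finset.card_union_of_disjoint, h1]
      exact (h.mono Finset.inter_subset_right Finset.inter_subset_right)
    rw [h1, ← pow_add, ← h2]

theorem gp_mul (A B : Finset V) (P Q : Finset V → Prop) :
    gp A P * gp B Q = ∑ S ∈ A.powerset, ∑ T ∈ B.powerset,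
      if P S ∧ Q T then Polynomial.X ^ S.card * Polynomial.X ^ T.card else 0 := by
  unfold gp
  rw [Finset.sum_mul_sum]
  refine Finset.sum_congr rfl fun S _ => Finset.sum_congr rfl fun T _ => ?_
  by_cases h1 : P S <;> by_cases h2 : Q T <;> simp [h1, h2]

theorem gp_all (G : SimpleGraph V) (A : Finset V) (w : V) :
    gp A (PE G w) + gp A (PZ G w) + gp A (PO G w) = gp A (IsDissoc G) := by
  unfold gp
  rw [← Finset.sum_add_distrib, ← Finset.sum_add_distrib]
  refine Finset.sum_congr rfl fun S _ => ?_
  by_cases h1 : IsDissoc G S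
  · by_cases hw : w ∈ S
    · have := h1 w hw
      rcases Nat.le_one_iff_eq_zero_or_eq_one.mp this with h0 | h0 <;>
        simp [PE, PZ, PO, h1, hw, h0]
    · simp [PE, PZ, PO, h1, hw]
  · simp [PE, PZ, PO, h1]

section join
variable {G : SimpleGraph V} {A B S T : Finset V} {w c : V}

theorem nbrCount_union (hd : Disjoint A B) (hS : S ⊆ A) (hT : T ⊆ B) (v : V) :
    nbrCount G (S ∪ T) v = nbrCount G S v + nbrCount G T v := by
  simp only [nbrCount_eq, Finset.filter_union]
  exact Finset.card_union_of_disjoint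
    ((hd.mono hS hT).mono (Finset.filter_subset _ _) (Finset.filter_subset _ _))

theorem nbrCount_cross (hT : T ⊆ B) (hwc : G.Adj w c) 
    (he : ∀ a ∈ A, ∀ b ∈ B, G.Adj a b → a = w ∧ b = c) {v : V} (hv : v ∈ A) :
    nbrCount G T v = if v = w ∧ c ∈ T then 1 else 0 := by
  rw [nbrCount_eq]
  split_ifs with h
  · obtain ⟨rfl, h⟩ := h
    rw [Finset.card_eq_one]
    refine ⟨c, ?_⟩
    ext x
    simp only [Finset.mem_filter, Finset.mem_singleton]
    constructor
    · rintro ⟨hx, hx'⟩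
      exact (he _ hv x (hT hx) hx').2
    · rintro rfl
      exact ⟨h, hwc⟩
  · rw [Finset.card_eq_zero, Finset.filter_eq_empty_iff]
    intro x hx hx'
    obtain ⟨rfl, rfl⟩ := he v hv x (hT hx) hx'
    exact h ⟨rfl, hx⟩

theorem dissoc_union (hd : Disjoint A B) (hw : w ∈ A) (hc : c ∈ B) (hwc : G.Adj w c)
    (he : ∀ a ∈ A, ∀ b ∈ B, G.Adj a b → a = w ∧ b = c) (hS : S ⊆ A) (hT : T ⊆ B) :
    IsDissoc G (S ∪ T) ↔ IsDissoc G S ∧ IsDissoc G T ∧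
      (w ∈ S → c ∈ T → nbrCount G S w = 0 ∧ nbrCount G T c = 0) := by
  have he' : ∀ b ∈ B, ∀ a ∈ A, G.Adj b a → b = c ∧ a = w := fun b hb a ha h =>
    (he a ha b hb h.symm).symm
  constructor
  · intro h
    refine ⟨h.mono Finset.subset_union_left, h.mono Finset.subset_union_right, ?_⟩
    intro h1 h2
    have e1 := h w (Finset.mem_union_left _ h1)
    have e2 := h c (Finset.mem_union_right _ h2)
    rw [nbrCount_union hd hS hT, nbrCount_cross hT hwc he hw] at e1
    rw [nbrCount_union hd hS hT, nbrCount_cross hS hwc.symm he' hc] at e2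
    simp only [h1, h2, and_self, if_true] at e1 e2
    omega
  · rintro ⟨h1, h2, h3⟩ v hv
    rw [nbrCount_union hd hS hT]
    rcases Finset.mem_union.mp hv with hv | hv
    · rw [nbrCount_cross hT hwc he (hS hv)]
      have := h1 v hv
      split_ifs with h
      · obtain ⟨rfl, h⟩ := h
        have := h3 hv h
        omega
      · omega
    · rw [nbrCount_cross hS hwc.symm he' (hT hv)]
      have := h2 v hv
      split_ifs with h
      · obtain ⟨rfl, h⟩ := h
        have := h3 h hv
        omega
      · omega

theorem gp_joinE (hd : Disjoint A B) (hw : w ∈ A) (hc : c ∈ B) (hwc : G.Adj w c)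
    (he : ∀ a ∈ A, ∀ b ∈ B, G.Adj a b → a = w ∧ b = c) :
    gp (A ∪ B) (PE G w) = gp A (PE G w) * gp B (IsDissoc G) := by
  rw [gp_union A B hd, gp_mul]
  refine Finset.sum_congr rfl fun S hS => Finset.sum_congr rfl fun T hT => ?_
  rw [Finset.mem_powerset] at hS hT
  have hwT : w ∉ T := fun h => Finset.disjoint_left.mp hd hw (hT h)
  congr 1
  simp only [PE, dissoc_union hd hw hc hwc he hS hT, Finset.mem_union, eq_iff_iff]
  tauto

theorem gp_joinZ (hd : Disjoint A B) (hw : w ∈ A) (hc : c ∈ B) (hwc : G.Adj w c)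
    (he : ∀ a ∈ A, ∀ b ∈ B, G.Adj a b → a = w ∧ b = c) :
    gp (A ∪ B) (PZ G w) = gp A (PZ G w) * gp B (PE G c) := by
  rw [gp_union A B hd, gp_mul]
  refine Finset.sum_congr rfl fun S hS => Finset.sum_congr rfl fun T hT => ?_
  rw [Finset.mem_powerset] at hS hT
  have hwT : w ∉ T := fun h => Finset.disjoint_left.mp hd hw (hT h)
  congr 1
  simp only [PZ, PE, dissoc_union hd hw hc hwc he hS hT, Finset.mem_union, eq_iff_iff,
    nbrCount_union hd hS hT, nbrCount_cross hT hwc he hw, true_and]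
  by_cases h : c ∈ T
  · simp [h]
  · simp [h, hwT]
    tauto

theorem gp_joinO (hd : Disjoint A B) (hw : w ∈ A) (hc : c ∈ B) (hwc : G.Adj w c)
    (he : ∀ a ∈ A, ∀ b ∈ B, G.Adj a b → a = w ∧ b = c) :
    gp (A ∪ B) (PO G w) = gp A (PO G w) * gp B (PE G c) + gp A (PZ G w) * gp B (PZ G c) := by
  rw [gp_union A B hd, gp_mul, gp_mul, ← Finset.sum_add_distrib]
  refine Finset.sum_congr rfl fun S hS => ?_
  rw [← Finset.sum_add_distrib]
  refine Finset.sum_congr rfl fun T hT => ?_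
  rw [Finset.mem_powerset] at hS hT
  have hwT : w ∉ T := fun h => Finset.disjoint_left.mp hd hw (hT h)
  simp only [PO, PZ, PE, dissoc_union hd hw hc hwc he hS hT, Finset.mem_union,
    nbrCount_union hd hS hT, nbrCount_cross hT hwc he hw, true_and]
  by_cases h : c ∈ T
  · simp only [h, if_true, not_true, and_false, if_false, zero_add, hwT, or_false]
    congr 1
    simp only [eq_iff_iff]
    constructor
    · rintro ⟨⟨a, b, d⟩, e, f⟩
      have := d e trivial
      tauto
    · rintro ⟨⟨a, b, d⟩, e, f, g⟩
      refine ⟨⟨a, e, fun _ _ => ⟨d, g⟩⟩, b, by omega⟩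
  · simp only [h, if_false, not_false_eq_true, and_true, false_and, and_false, add_zero, hwT,
      or_false]
    congr 1
    simp only [eq_iff_iff]
    tauto

end join

theorem gp_singleE (G : SimpleGraph V) (w : V) : gp {w} (PE G w) = 1 := by
  have h0 : IsDissoc G (∅ : Finset V) := by simp [IsDissoc]
  rw [gp, show ({w} : Finset V).powerset = {∅, {w}} from rfl, Finset.sum_pair (by simp)]
  simp [PE, h0]

theorem nbr_single (G : SimpleGraph V) (w : V) : nbrCount G {w} w = 0 := by
  rw [nbrCount_eq]
  simp [Finset.filter_singleton]

theorem gp_singleZ (G : SimpleGraph V) (w : V) : gp {w} (PZ G w) = Polynomial.X := by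
  have h0 : IsDissoc G ({w} : Finset V) := by simp [IsDissoc, nbr_single]
  have : ∀ P, gp {w} P = (if P ∅ then Polynomial.X ^ 0 else 0) + 
      (if P {w} then Polynomial.X ^ 1 else 0) := by
    intro P
    rw [gp, show ({w} : Finset V).powerset = {∅, {w}} from rfl, Finset.sum_pair (by simp)]
    simp
  simp [this, PZ, h0, nbr_single]

theorem gp_singleO (G : SimpleGraph V) (w : V) : gp {w} (PO G w) = 0 := by
  have h0 : IsDissoc G ({w} : Finset V) := by simp [IsDissoc, nbr_single]
  have : ∀ P, gp {w} P = (if P ∅ then Polynomial.X ^ 0 else 0) + 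
      (if P {w} then Polynomial.X ^ 1 else 0) := by
    intro P
    rw [gp, show ({w} : Finset V).powerset = {∅, {w}} from rfl, Finset.sum_pair (by simp)]
    simp
  simp [this, PO, nbr_single]

/-- rooted trees built by joining -/
inductive RT (G : SimpleGraph V) : Finset V → V → Prop
  | single (w : V) : RT G {w} w
  | join (A B : Finset V) (w c : V) : RT G A w → RT G B c → Disjoint A B → G.Adj w c →
      (∀ a ∈ A, ∀ b ∈ B, G.Adj a b → a = w ∧ b = c) → RT G (A ∪ B) w

theorem RT.mem {G : SimpleGraph V} {A : Finset V} {w : V} (h : RT G A w) : w ∈ A := by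
  induction h with
  | single w => simp
  | join A B w c _ _ _ _ _ ih _ => exact Finset.mem_union_left _ ih

theorem RT.st {G : SimpleGraph V} {A : Finset V} {w : V} (h : RT G A w) :
    St A.card (gp A (PE G w)) (gp A (PZ G w)) (gp A (PO G w)) := by
  induction h with
  | single w =>
    rw [gp_singleE, gp_singleZ, gp_singleO]
    exact St.single
  | join A B w c hA hB hd hwc he ih ih' =>
    rw [Finset.card_union_of_disjoint hd, gp_joinE hd hA.mem hB.mem hwc he,
      gp_joinZ hd hA.mem hB.mem hwc he, gp_joinO hd hA.mem hB.mem hwc he, ← gp_all G B c]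
    exact ih.join ih'

theorem RT.insert_leaf {G : SimpleGraph V} {A : Finset V} {w : V} (h : RT G A w) :
    ∀ (x a : V), x ∉ A → a ∈ A → G.Adj a x → (∀ b ∈ A, G.Adj b x → b = a) →
      RT G (A ∪ {x}) w := by
  induction h with
  | single w =>
    intro x a hx ha hax hu
    rw [Finset.mem_singleton] at ha
    subst ha
    refine RT.join _ _ _ x (RT.single _) (RT.single _) (by simpa [eq_comm] using hx) hax ?_
    simp
  | join A B w c hA hB hd hwc he ih ih' =>
    intro x a hx ha hax hu
    have hxA : x ∉ A := fun h => hx (Finset.mem_union_left _ h)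
    have hxB : x ∉ B := fun h => hx (Finset.mem_union_right _ h)
    rcases Finset.mem_union.mp ha with ha' | ha'
    · have h1 := ih x a hxA ha' hax (fun b hb => hu b (Finset.mem_union_left _ hb))
      rw [Finset.union_right_comm]
      refine RT.join _ _ _ c h1 hB ?_ hwc ?_
      · rw [Finset.disjoint_union_left]
        exact ⟨hd, by simpa using hxB⟩
      · intro p hp q hq hpq
        rcases Finset.mem_union.mp hp with hp | hp
        · exact he p hp q hq hpq
        · rw [Finset.mem_singleton] at hp
          subst hp
          have := hu q (Finset.mem_union_right _ hq) hpq.symm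
          subst this
          exact absurd hq (Finset.disjoint_left.mp hd ha')
    · have h1 := ih' x a hxB ha' hax (fun b hb => hu b (Finset.mem_union_right _ hb))
      rw [Finset.union_assoc]
      refine RT.join _ _ _ c hA h1 ?_ hwc ?_
      · rw [Finset.disjoint_union_right]
        exact ⟨hd, by simpa using hxA⟩
      · intro p hp q hq hpq
        rcases Finset.mem_union.mp hq with hq | hq
        · exact he p hp q hq hpq
        · rw [Finset.mem_singleton] at hq
          subst hq
          have := hu p (Finset.mem_union_left _ hp) hpq
          subst this
          exact absurd ha' (Finset.disjoint_left.mp hd hp)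

theorem gp_coeff (A : Finset V) (P : Finset V → Prop) (d : ℕ) :
    (gp A P).coeff d = ((A.powerset.filter (fun S => P S ∧ S.card = d)).card : ℤ) := by
  unfold gp
  rw [Polynomial.finsetSum_coeff, Finset.card_filter]
  push_cast
  refine Finset.sum_congr rfl fun S _ => ?_
  by_cases h : P S
  · simp [h, Polynomial.coeff_X_pow, eq_comm]
  · simp [h]

theorem gp_card_le {A S : Finset V} {P : Finset V → Prop} {d : ℕ} {E : ℤ}
    (h : top (gp A P) d E) (hS : S ⊆ A) (hP : P S) : S.card ≤ d := by
  by_contra hlt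
  have h1 := Polynomial.coeff_eq_zero_of_natDegree_lt (h.1.trans_lt (not_le.mp hlt))
  rw [gp_coeff] at h1
  have : S ∈ A.powerset.filter (fun T => P T ∧ T.card = S.card) := by simp [hS, hP]
  have h2 := Finset.card_pos.mpr ⟨S, this⟩
  omega

/-! ### The structure of potted graphs -/

/-- a parametrisation of the cycle of a potted graph -/
structure Pot (G : SimpleGraph V) (k : ℕ) (f : ℕ → V) : Prop where
  k3 : 3 ≤ k
  per : ∀ i, f (i + k) = f i
  inj : ∀ i j, i < k → j < k → f i = f j → i = j
  adj : ∀ i, G.Adj (f i) (f (i + 1))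
  nb : ∀ i, 0 < i → i < k → ∀ x, G.Adj (f i) x → x = f (i - 1) ∨ x = f (i + 1)

theorem Pot.fmod {G : SimpleGraph V} {k : ℕ} {f : ℕ → V} (P : Pot G k f) (i : ℕ) :
    f (i % k) = f i := by
  have h : ∀ q j, f (j + k * q) = f j := by
    intro q
    induction q with
    | zero => simp
    | succ q ih =>
      intro j
      rw [Nat.mul_succ, ← add_assoc, P.per, ih]
  rw [← h (i / k) (i % k), Nat.mod_add_div]

theorem Pot.ne_two {G : SimpleGraph V} {k : ℕ} {f : ℕ → V} (P : Pot G k f) (i : ℕ) :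
    f i ≠ f (i + 2) := by
  intro h
  have hk := P.k3
  rw [← P.fmod i, ← P.fmod (i + 2)] at h
  have h2 := P.inj _ _ (Nat.mod_lt _ (by omega)) (Nat.mod_lt _ (by omega)) h
  have h3 : k ∣ (i + 2) - i := (Nat.modEq_iff_dvd' (by omega)).mp h2
  have := Nat.le_of_dvd (by omega) h3
  omega

theorem exists_pot [Fintype V] {G : SimpleGraph V} {k : ℕ} (hG : IsPotted G k) (hk : 3 ≤ k) :
    ∃ f, Pot G k f := by
  obtain ⟨-, -, v, c₀, hc₀, hl₀, u, ⟨hu, hdu⟩, huniq⟩ := hG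
  obtain ⟨c, hc, hl, hsupp⟩ : ∃ c : G.Walk u u, c.IsCycle ∧ c.length = k ∧
      ∀ x ∈ c.support, x ∈ c₀.support :=
    ⟨c₀.rotate u hu, (SimpleGraph.Walk.isCycle_rotate hu).mpr hc₀, by simpa using hl₀,
      fun x hx => (SimpleGraph.Walk.mem_support_rotate_iff c₀ u hu).mp hx⟩
  have hinj : ∀ i j, i < k → j < k → c.getVert i = c.getVert j → i = j := by
    intro i j hi hj h
    refine hc.getVert_injOn' ?_ ?_ h <;> simp only [Set.mem_setOf_eq] <;> omega
  have hk0 : c.getVert k = c.getVert 0 := by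
    rw [← hl, SimpleGraph.Walk.getVert_length, SimpleGraph.Walk.getVert_zero]
  have hstep : ∀ i, c.getVert ((i + 1) % k) = c.getVert (i % k + 1) := by
    intro i
    have h1 : i % k < k := Nat.mod_lt _ (by omega)
    rw [← Nat.mod_add_mod]
    rcases Nat.lt_or_ge (i % k + 1) k with h | h
    · rw [Nat.mod_eq_of_lt h]
    · have : i % k + 1 = k := by omega
      rw [this, Nat.mod_self, hk0]
  have hadj : ∀ i, G.Adj (c.getVert (i % k)) (c.getVert ((i + 1) % k)) := by
    intro i
    rw [hstep]
    exact c.adj_getVert_succ (by rw [hl]; exact Nat.mod_lt _ (by omega))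
  refine ⟨fun i => c.getVert (i % k), hk, ?_, ?_, hadj, ?_⟩
  · intro i
    simp
  · intro i j hi hj h
    simp only [Nat.mod_eq_of_lt hi, Nat.mod_eq_of_lt hj] at h
    exact hinj i j hi hj h
  · intro i hi hik x hx
    have hne : c.getVert (i % k) ≠ u := by
      intro h
      rw [Nat.mod_eq_of_lt hik] at h
      have : i = 0 := hinj i 0 hik (by omega) (by rw [h, SimpleGraph.Walk.getVert_zero])
      omega
    have hdeg : (G.neighborSet (c.getVert (i % k))).ncard ≤ 2 := by
      by_contra hlt
      exact hne (huniq _ ⟨hsupp _ (c.getVert_mem_support _), not_le.mp hlt⟩)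
    have h1 := hadj i
    have h2 := hadj (i - 1)
    rw [show i - 1 + 1 = i by omega] at h2
    have h12 : c.getVert ((i - 1) % k) ≠ c.getVert ((i + 1) % k) := by
      intro h
      have h3 := hinj _ _ (Nat.mod_lt _ (by omega)) (Nat.mod_lt _ (by omega)) h
      have h4 : k ∣ (i + 1) - (i - 1) := (Nat.modEq_iff_dvd' (by omega)).mp h3
      have := Nat.le_of_dvd (by omega) h4
      omega
    by_contra! hcon
    have hsub : (({x, c.getVert ((i - 1) % k), c.getVert ((i + 1) % k)} : Finset V) : Set V) ⊆
        G.neighborSet (c.getVert (i % k)) := by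
      intro y hy
      simp only [Finset.coe_insert, Finset.coe_singleton, Set.mem_insert_iff,
        Set.mem_singleton_iff] at hy
      rcases hy with rfl | rfl | rfl
      · exact hx
      · exact h2.symm
      · exact h1
    have h5 := Set.ncard_le_ncard hsub (Set.toFinite _)
    rw [Set.ncard_coe_finset, Finset.card_eq_three.mpr ⟨_, _, _, hcon.1, hcon.2, h12, rfl⟩] at h5
    omega

/-- number of ordered adjacent pairs inside `B` -/
noncomputable def pairs (G : SimpleGraph V) (B : Finset V) : ℕ := ∑ v ∈ B, nbrCount G B v

theorem nbrCount_insert (G : SimpleGraph V) (B : Finset V) (x v : V) (hx : x ∉ B) :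
    nbrCount G (insert x B) v = nbrCount G B v + if G.Adj v x then 1 else 0 := by
  rw [nbrCount_eq, nbrCount_eq, Finset.filter_insert]
  split_ifs with h
  · rw [Finset.card_insert_of_notMem (by simp [hx])]
  · rfl

theorem pairs_insert (G : SimpleGraph V) (B : Finset V) (x : V) (hx : x ∉ B) :
    pairs G (insert x B) = pairs G B + 2 * nbrCount G B x := by
  unfold pairs
  rw [Finset.sum_insert hx]
  simp only [nbrCount_insert G B x _ hx, Finset.sum_add_distrib]
  have : (∑ v ∈ B, if G.Adj v x then 1 else 0) = nbrCount G B x := by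
    rw [nbrCount_eq, Finset.card_filter]
    exact Finset.sum_congr rfl fun v _ => by simp only [G.adj_comm]
  rw [this]
  simp
  ring

theorem exists_out [Fintype V] {G : SimpleGraph V} (hG : G.Connected) (B : Finset V)
    (hB : B.Nonempty) (hne : ∃ x, x ∉ B) : ∃ a ∈ B, ∃ x ∉ B, G.Adj a x := by
  obtain ⟨b, hb⟩ := hB
  obtain ⟨y, hy⟩ := hne
  obtain ⟨p⟩ := hG.preconnected b y
  obtain ⟨d, -, h1, h2⟩ := p.exists_boundary_dart (B : Set V) (by simpa using hb)
    (by simpa using hy)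
  exact ⟨d.fst, by simpa using h1, d.snd, by simpa using h2, d.adj⟩

theorem pairs_le [Fintype V] {G : SimpleGraph V} (hG : G.Connected)
    (hE : G.edgeSet.ncard = Nat.card V) :
    ∀ (m : ℕ) (B : Finset V), B.Nonempty → Bᶜ.card = m → pairs G B ≤ 2 * B.card := by
  intro m
  induction m with
  | zero =>
    intro B _ hm
    have : B = Finset.univ := by
      rw [Finset.card_eq_zero, Finset.compl_eq_empty_iff] at hm
      exact hm
    subst this
    have h1 : pairs G Finset.univ = ∑ v, G.degree v := by
      unfold pairs
      refine Finset.sum_congr rfl fun v _ => ?_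
      rw [nbrCount_eq, ← SimpleGraph.card_neighborFinset_eq_degree]
      congr 1
      ext x
      simp
    rw [h1, SimpleGraph.sum_degrees_eq_twice_card_edges, Finset.card_univ,
      ← Nat.card_eq_fintype_card, ← hE, ← SimpleGraph.coe_edgeFinset, Set.ncard_coe_finset]
  | succ m ih =>
    intro B hB hm
    have hne : ∃ x, x ∉ B := by
      obtain ⟨x, hx⟩ := Finset.card_pos.mp (show 0 < Bᶜ.card by omega)
      exact ⟨x, by simpa using hx⟩
    obtain ⟨a, ha, x, hx, hax⟩ := exists_out hG B hB hne
    have h1 := ih (insert x B) ⟨x, by simp⟩ (by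
      rw [Finset.compl_insert, Finset.card_erase_of_mem (by simpa using hx)]
      omega)
    rw [pairs_insert G B x hx, Finset.card_insert_of_notMem hx] at h1
    have h2 : 1 ≤ nbrCount G B x := by
      rw [nbrCount_eq, Nat.one_le_iff_ne_zero, ← Nat.pos_iff_ne_zero, Finset.card_pos]
      exact ⟨a, by simp [ha, hax.symm]⟩
    omega

section pot
variable [Fintype V] {G : SimpleGraph V} {k : ℕ} {f : ℕ → V}

/-- the vertices outside the cycle, together with the attaching vertex -/
noncomputable def TT (k : ℕ) (f : ℕ → V) : Finset V := ((Finset.Ico 1 k).image f)ᶜ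

theorem mem_TT {x : V} : x ∈ TT k f ↔ ∀ i, 0 < i → i < k → f i ≠ x := by
  simp only [TT, Finset.mem_compl, Finset.mem_image, Finset.mem_Ico, not_exists, not_and]
  exact ⟨fun h i h1 h2 => h i ⟨h1, h2⟩, fun h i h1 => h i h1.1 h1.2⟩

theorem Pot.zero_mem (P : Pot G k f) : f 0 ∈ TT k f := by
  rw [mem_TT]
  intro i h1 h2 h
  have := P.inj i 0 h2 (by omega) h
  omega

theorem Pot.card_TT (P : Pot G k f) : (TT k f).card + k = Fintype.card V + 1 := by
  have hk := P.k3
  have h : ((Finset.Ico 1 k).image f).card = k - 1 := by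
    rw [Finset.card_image_of_injOn, Nat.card_Ico]
    intro i hi j hj h
    simp only [Finset.coe_Ico, Set.mem_Ico] at hi hj
    exact P.inj i j hi.2 hj.2 h
  have h2 := Finset.card_compl_add_card ((Finset.Ico 1 k).image f)
  unfold TT
  omega

/-- vertices of the cycle -/
noncomputable def CC (k : ℕ) (f : ℕ → V) : Finset V := (Finset.range k).image f

theorem Pot.mem_CC (P : Pot G k f) (i : ℕ) : f i ∈ CC k f := by
  have hk := P.k3
  rw [CC, Finset.mem_image]
  exact ⟨i % k, Finset.mem_range.mpr (Nat.mod_lt _ (by omega)), P.fmod i⟩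

theorem Pot.card_CC (P : Pot G k f) : (CC k f).card = k := by
  rw [CC, Finset.card_image_of_injOn, Finset.card_range]
  intro i hi j hj h
  simp only [Finset.coe_range, Set.mem_Iio] at hi hj
  exact P.inj i j hi hj h

theorem Pot.pairs_CC (P : Pot G k f) : 2 * (CC k f).card ≤ pairs G (CC k f) := by
  unfold pairs
  rw [mul_comm, ← smul_eq_mul]
  refine Finset.card_nsmul_le_sum _ _ _ ?_
  intro v hv
  obtain ⟨i, -, rfl⟩ := Finset.mem_image.mp hv
  have hk := P.k3
  rw [← P.per i]
  have h1 := P.adj (i + k)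
  have h2 := P.adj (i + k - 1)
  have h3 := P.ne_two (i + k - 1)
  rw [show i + k - 1 + 1 = i + k by omega] at h2
  rw [show i + k - 1 + 2 = i + k + 1 by omega] at h3
  rw [nbrCount_eq, ← Finset.card_pair h3]
  refine Finset.card_le_card ?_
  intro x hx
  simp only [Finset.mem_insert, Finset.mem_singleton] at hx
  rw [Finset.mem_filter]
  rcases hx with rfl | rfl
  · exact ⟨P.mem_CC _, h2.symm⟩
  · exact ⟨P.mem_CC _, h1⟩

theorem Pot.nb_CC (P : Pot G k f) {i : ℕ} (h0 : 0 < i) (hi : i < k) {x : V}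
    (h : G.Adj (f i) x) : x ∈ CC k f := by
  rcases P.nb i h0 hi x h with rfl | rfl <;> exact P.mem_CC _

theorem Pot.rt (P : Pot G k f) (hG : G.Connected) (hE : G.edgeSet.ncard = Nat.card V) :
    RT G (TT k f) (f 0) := by
  have key : ∀ (m : ℕ) (A : Finset V), A ⊆ TT k f → RT G A (f 0) →
      2 * (A ∪ CC k f).card ≤ pairs G (A ∪ CC k f) → (TT k f \ A).card = m →
      RT G (TT k f) (f 0) := by
    intro m
    induction m with
    | zero =>
      intro A hA hR _ hm
      rw [Finset.card_eq_zero, Finset.sdiff_eq_empty_iff_subset] at hm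
      rwa [Finset.Subset.antisymm hm hA]
    | succ m ih =>
      intro A hA hR hp hm
      obtain ⟨y, hy⟩ := Finset.card_pos.mp (show 0 < (TT k f \ A).card by omega)
      rw [Finset.mem_sdiff] at hy
      have hyB : y ∉ A ∪ CC k f := by
        rw [Finset.mem_union, not_or]
        refine ⟨hy.2, ?_⟩
        intro hc
        obtain ⟨i, hi, rfl⟩ := Finset.mem_image.mp hc
        rcases Nat.eq_zero_or_pos i with rfl | h0
        · exact hy.2 hR.mem
        · exact mem_TT.mp hy.1 i h0 (Finset.mem_range.mp hi) rfl
      obtain ⟨a, ha, x, hx, hax⟩ := exists_out hG (A ∪ CC k f)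
        ⟨f 0, Finset.mem_union_left _ hR.mem⟩ ⟨y, hyB⟩
      have hxA : x ∉ A := fun h => hx (Finset.mem_union_left _ h)
      have hxC : x ∉ CC k f := fun h => hx (Finset.mem_union_right _ h)
      have haA : a ∈ A := by
        rcases Finset.mem_union.mp ha with h | h
        · exact h
        · obtain ⟨i, hi, rfl⟩ := Finset.mem_image.mp h
          rcases Nat.eq_zero_or_pos i with rfl | h0
          · exact hR.mem
          · exact absurd (P.nb_CC h0 (Finset.mem_range.mp hi) hax) hxC
      have hle := pairs_le hG hE _ (insert x (A ∪ CC k f)) ⟨x, by simp⟩ rfl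
      rw [pairs_insert _ _ _ hx, Finset.card_insert_of_notMem hx] at hle
      have hxT : x ∈ TT k f := by
        rw [mem_TT]
        rintro i h0 hi rfl
        exact hxC (P.mem_CC i)
      have hn1 : nbrCount G (A ∪ CC k f) x ≤ 1 := by omega
      have hn2 : 1 ≤ nbrCount G (A ∪ CC k f) x := by
        rw [nbrCount_eq, Nat.one_le_iff_ne_zero, ← Nat.pos_iff_ne_zero, Finset.card_pos]
        exact ⟨a, by rw [Finset.mem_filter]; exact ⟨ha, hax.symm⟩⟩
      have hR' := hR.insert_leaf x a hxA haA hax (by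
        intro b hb hbx
        rw [nbrCount_eq, Finset.card_le_one] at hn1
        refine hn1 b ?_ a ?_
        · rw [Finset.mem_filter]
          exact ⟨Finset.mem_union_left _ hb, hbx.symm⟩
        · rw [Finset.mem_filter]
          exact ⟨ha, hax.symm⟩)
      refine ih (A ∪ {x}) ?_ hR' ?_ ?_
      · exact Finset.union_subset hA (by simpa using hxT)
      · rw [show A ∪ {x} ∪ CC k f = insert x (A ∪ CC k f) by
          ext z; simp only [Finset.mem_union, Finset.mem_insert, Finset.mem_singleton]; tauto]
        rw [pairs_insert _ _ _ hx, Finset.card_insert_of_notMem hx]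
        omega
      · have h6 : TT k f \ (A ∪ {x}) = (TT k f \ A).erase x := by
          ext z
          simp only [Finset.mem_sdiff, Finset.mem_union, Finset.mem_erase, Finset.mem_singleton]
          tauto
        rw [h6, Finset.card_erase_of_mem (by simp [hxT, hxA])]
        omega
  refine key _ {f 0} ?_ (RT.single _) ?_ rfl
  · simpa using P.zero_mem
  · rw [Finset.union_eq_right.mpr (by simpa using P.mem_CC 0)]
    exact P.pairs_CC

end pot

/-! ### Counting maximum dissociation sets -/

section count
variable [Fintype V] {G : SimpleGraph V} {k : ℕ} {f : ℕ → V} {S : Finset V}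

/-- indicator of `f i ∈ S` -/
noncomputable def chi (f : ℕ → V) (S : Finset V) (i : ℕ) : ℕ := if f i ∈ S then 1 else 0

theorem Pot.triple (P : Pot G k f) (hS : IsDissoc G S) (i : ℕ) :
    chi f S i + chi f S (i + 1) + chi f S (i + 2) ≤ 2 := by
  unfold chi
  by_cases h0 : f i ∈ S <;> by_cases h1 : f (i + 1) ∈ S <;> by_cases h2 : f (i + 2) ∈ S <;>
    simp only [h0, h1, h2, if_true, if_false] <;> try omega
  exfalso
  have h3 := hS _ h1
  rw [nbrCount_eq, Finset.card_le_one] at h3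
  refine P.ne_two i (h3 _ ?_ _ ?_)
  · rw [Finset.mem_filter]
    exact ⟨h0, (P.adj i).symm⟩
  · rw [Finset.mem_filter]
    exact ⟨h2, P.adj (i + 1)⟩

theorem Pot.sum_shift (P : Pot G k f) (j : ℕ) :
    ∑ i ∈ Finset.range k, chi f S (i + j) = ∑ i ∈ Finset.range k, chi f S i := by
  induction j with
  | zero => simp
  | succ j ih =>
    rw [← ih]
    have h1 := Finset.sum_range_succ (fun i => chi f S (i + j)) k
    have h2 := Finset.sum_range_succ' (fun i => chi f S (i + j)) k
    have h3 : chi f S (k + j) = chi f S (0 + j) := by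
      unfold chi
      rw [add_comm k j, P.per, zero_add]
    have h4 : ∑ i ∈ Finset.range k, chi f S (i + (j + 1)) =
        ∑ i ∈ Finset.range k, chi f S (i + 1 + j) :=
      Finset.sum_congr rfl fun i _ => by rw [add_assoc, add_comm 1 j]
    omega

theorem Pot.three_mul (P : Pot G k f) :
    3 * ∑ i ∈ Finset.range k, chi f S i =
      ∑ i ∈ Finset.range k, (chi f S i + chi f S (i + 1) + chi f S (i + 2)) := by
  rw [Finset.sum_add_distrib, Finset.sum_add_distrib, P.sum_shift 1, P.sum_shift 2]
  ring

theorem Pot.sum_chi (P : Pot G k f) :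
    ∑ i ∈ Finset.range k, chi f S i = (S ∩ CC k f).card := by
  have h : S ∩ CC k f = ((Finset.range k).filter (fun i => f i ∈ S)).image f := by
    ext x
    simp only [Finset.mem_inter, CC, Finset.mem_image, Finset.mem_filter]
    constructor
    · rintro ⟨h1, i, h2, rfl⟩
      exact ⟨i, ⟨h2, h1⟩, rfl⟩
    · rintro ⟨i, ⟨h2, h1⟩, rfl⟩
      exact ⟨h1, i, h2, rfl⟩
  rw [h, Finset.card_image_of_injOn, Finset.card_filter]
  · rfl
  · intro i hi j hj h
    simp only [Finset.coe_filter, Finset.mem_range] at hi hj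
    exact P.inj i j hi.1 hj.1 h

theorem Pot.inter_le (P : Pot G k f) (hS : IsDissoc G S) : 3 * (S ∩ CC k f).card ≤ 2 * k := by
  rw [← P.sum_chi, P.three_mul]
  refine (Finset.sum_le_sum fun i _ => P.triple hS i).trans ?_
  simp [mul_comm]

theorem Pot.triple_eq (P : Pot G k f) (hS : IsDissoc G S) (h : 3 * (S ∩ CC k f).card = 2 * k) :
    ∀ i < k, chi f S i + chi f S (i + 1) + chi f S (i + 2) = 2 := by
  rw [← P.sum_chi, P.three_mul] at h
  have h2 : ∑ i ∈ Finset.range k, (chi f S i + chi f S (i + 1) + chi f S (i + 2)) =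
      ∑ i ∈ Finset.range k, 2 := by
    rw [h]
    simp [mul_comm]
  have h3 := (Finset.sum_eq_sum_iff_of_le fun i _ => P.triple hS i).mp h2
  intro i hi
  exact h3 i (Finset.mem_range.mpr hi)

theorem Pot.chi_mod (P : Pot G k f) (hS : IsDissoc G S) (h : 3 * (S ∩ CC k f).card = 2 * k) :
    ∀ i < k, chi f S i = chi f S (i % 3) := by
  have ht := P.triple_eq hS h
  intro i
  induction i using Nat.strong_induction_on with
  | _ i ih =>
    intro hi
    rcases Nat.lt_or_ge i 3 with h3 | h3
    · rw [Nat.mod_eq_of_lt h3]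
    · have h4 := ih (i - 3) (by omega) (by omega)
      have h5 := ht (i - 3) (by omega)
      have h6 := ht (i - 2) (by omega)
      rw [show i - 3 + 1 = i - 2 by omega, show i - 3 + 2 = i - 1 by omega] at h5
      rw [show i - 2 + 1 = i - 1 by omega, show i - 2 + 2 = i by omega] at h6
      rw [show i % 3 = (i - 3) % 3 by omega, ← h4]
      omega

theorem chi_le (i : ℕ) : chi f S i ≤ 1 := by
  unfold chi
  split_ifs <;> omega

theorem chi_one {i : ℕ} : chi f S i = 1 ↔ f i ∈ S := by
  unfold chi
  split_ifs with h <;> simp [h]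

/-- in the equality case exactly one residue class is missing -/
theorem Pot.pattern (P : Pot G k f) (hS : IsDissoc G S) (h : 3 * (S ∩ CC k f).card = 2 * k) :
    ∃ j < 3, ∀ i < k, f i ∈ S ↔ i % 3 ≠ j := by
  have hk := P.k3
  have hm := P.chi_mod hS h
  have h0 := P.triple_eq hS h 0 (by omega)
  simp only [zero_add] at h0
  have a0 := chi_le (f := f) (S := S) 0
  have a1 := chi_le (f := f) (S := S) 1
  have a2 := chi_le (f := f) (S := S) 2
  have key : ∀ j < 3, chi f S j = 0 → ∀ i < k, f i ∈ S ↔ i % 3 ≠ j := by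
    intro j hj hj0 i hi
    rw [← chi_one, hm i hi]
    have : i % 3 = 0 ∨ i % 3 = 1 ∨ i % 3 = 2 := by omega
    have : j = 0 ∨ j = 1 ∨ j = 2 := by omega
    rcases this with rfl | rfl | rfl <;> rcases ‹i % 3 = 0 ∨ i % 3 = 1 ∨ i % 3 = 2› with e | e | e <;>
      rw [e] <;> constructor <;> intro _ <;> omega
  have : chi f S 0 = 0 ∨ chi f S 1 = 0 ∨ chi f S 2 = 0 := by omega
  rcases this with e | e | e
  · exact ⟨0, by omega, key 0 (by omega) e⟩
  · exact ⟨1, by omega, key 1 (by omega) e⟩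
  · exact ⟨2, by omega, key 2 (by omega) e⟩

theorem Pot.TT_inter_CC (P : Pot G k f) {x : V} (h1 : x ∈ TT k f) (h2 : x ∈ CC k f) :
    x = f 0 := by
  obtain ⟨i, hi, rfl⟩ := Finset.mem_image.mp h2
  rcases Nat.eq_zero_or_pos i with rfl | h0
  · rfl
  · exact absurd rfl (mem_TT.mp h1 i h0 (Finset.mem_range.mp hi))

theorem Pot.not_CC (P : Pot G k f) {x : V} (h : x ∉ CC k f) : x ∈ TT k f := by
  rw [mem_TT]
  rintro i - - rfl
  exact h (P.mem_CC i)

theorem Pot.card_split (P : Pot G k f) (S : Finset V) :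
    S.card = (S ∩ CC k f).card + (S \ CC k f).card := by
  rw [add_comm]
  exact (Finset.card_sdiff_add_card_inter S (CC k f)).symm

/-- a large dissociation set -/
theorem Pot.lower (P : Pot G k f) (hk : k % 3 = 0) {R : Finset V} (hR : R ⊆ TT k f)
    (hE : PE G (f 0) R) :
    ∃ S, IsDissoc G S ∧ 3 * S.card = 2 * k + 3 * R.card := by
  have hk3 := P.k3
  set I := (Finset.range k).filter (fun i => i % 3 ≠ 0) with hI
  have hnR : ∀ i, f i ∉ R := by
    intro i hi
    have := P.TT_inter_CC (hR hi) (P.mem_CC i)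
    rw [this] at hi
    exact hE.2 hi
  have hIm : ∀ i < k, i % 3 = 0 → f i ∉ I.image f := by
    intro i hi h0 h
    obtain ⟨j, hj, e⟩ := Finset.mem_image.mp h
    rw [hI, Finset.mem_filter, Finset.mem_range] at hj
    have := P.inj j i hj.1 hi e
    subst this
    exact hj.2 h0
  have hcI : 3 * I.card = 2 * k := by
    obtain ⟨t, rfl⟩ : ∃ t, k = 3 * t := ⟨k / 3, by omega⟩
    have : ∀ t, 3 * ((Finset.range (3 * t)).filter (fun i => i % 3 ≠ 0)).card = 2 * (3 * t) := by
      intro t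
      induction t with
      | zero => simp
      | succ t ih =>
        rw [Finset.card_filter] at ih ⊢
        rw [show 3 * (t + 1) = 3 * t + 1 + 1 + 1 by ring, Finset.sum_range_succ,
          Finset.sum_range_succ, Finset.sum_range_succ]
        rw [if_neg (by omega : ¬ (3 * t % 3 ≠ 0)), if_pos (by omega : (3 * t + 1) % 3 ≠ 0),
          if_pos (by omega : (3 * t + 1 + 1) % 3 ≠ 0)]
        omega
    exact this t
  refine ⟨R ∪ I.image f, ?_, ?_⟩
  · intro v hv
    rcases Finset.mem_union.mp hv with hv | hv
    · refine le_trans ?_ (hE.1 v hv)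
      rw [nbrCount_eq, nbrCount_eq]
      refine Finset.card_le_card ?_
      intro x hx
      rw [Finset.mem_filter] at hx ⊢
      refine ⟨?_, hx.2⟩
      rcases Finset.mem_union.mp hx.1 with h | h
      · exact h
      · obtain ⟨i, hi, rfl⟩ := Finset.mem_image.mp h
        rw [hI, Finset.mem_filter, Finset.mem_range] at hi
        have h0 : 0 < i := by
          rcases Nat.eq_zero_or_pos i with rfl | h0
          · simp at hi
          · exact h0
        have hvC := P.nb_CC h0 hi.1 hx.2.symm
        have := P.TT_inter_CC (hR hv) hvC
        rw [this] at hv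
        exact absurd hv (hnR 0)
    · obtain ⟨i, hi, rfl⟩ := Finset.mem_image.mp hv
      rw [hI, Finset.mem_filter, Finset.mem_range] at hi
      have h0 : 0 < i := by
        rcases Nat.eq_zero_or_pos i with rfl | h0
        · simp at hi
        · exact h0
      have hout : ∀ j, j ≤ k → j % 3 = 0 → f j ∉ R ∪ I.image f := by
        intro j hj h3 h
        rcases Finset.mem_union.mp h with h | h
        · exact hnR _ h
        · rcases Nat.lt_or_ge j k with h4 | h4
          · exact hIm j h4 h3 h
          · have : j = 0 + k := by omega
            rw [this, P.per] at h
            exact hIm 0 (by omega) rfl h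
      have : i % 3 = 1 ∨ i % 3 = 2 := by omega
      rcases this with h3 | h3
      · have hs : ((R ∪ I.image f).filter (G.Adj (f i))) ⊆ {f (i + 1)} := by
          intro x hx
          rw [Finset.mem_filter] at hx
          rcases P.nb i h0 hi.1 x hx.2 with rfl | rfl
          · exact absurd hx.1 (hout (i - 1) (by omega) (by omega))
          · simp
        rw [nbrCount_eq]
        exact (Finset.card_le_card hs).trans (by simp)
      · have hs : ((R ∪ I.image f).filter (G.Adj (f i))) ⊆ {f (i - 1)} := by
          intro x hx
          rw [Finset.mem_filter] at hx
          rcases P.nb i h0 hi.1 x hx.2 with rfl | rfl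
          · simp
          · exact absurd hx.1 (hout (i + 1) (by omega) (by omega))
        rw [nbrCount_eq]
        exact (Finset.card_le_card hs).trans (by simp)
  · rw [Finset.card_union_of_disjoint, Finset.card_image_of_injOn]
    · omega
    · intro i hi j hj h
      have hi' := Finset.mem_filter.mp (Finset.mem_coe.mp hi)
      have hj' := Finset.mem_filter.mp (Finset.mem_coe.mp hj)
      exact P.inj i j (Finset.mem_range.mp hi'.1) (Finset.mem_range.mp hj'.1) h
    · rw [Finset.disjoint_left]
      intro x hx h
      obtain ⟨i, hi, rfl⟩ := Finset.mem_image.mp h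
      exact hnR i hx

theorem le_dissNum (hS : IsDissoc G S) : S.card ≤ dissNumOn G Set.univ := by
  unfold dissNumOn
  refine le_csSup ⟨Fintype.card V, ?_⟩ ⟨S, by simp, hS, rfl⟩
  rintro n ⟨s, -, -, rfl⟩
  exact Finset.card_le_univ s

theorem Pot.inj_TT (P : Pot G k f) {j : ℕ} {S S' : Finset V}
    (h : ∀ i < k, f i ∈ S ↔ i % 3 ≠ j) (h' : ∀ i < k, f i ∈ S' ↔ i % 3 ≠ j)
    (e : S ∩ TT k f = S' ∩ TT k f) : S = S' := by
  ext x
  by_cases hx : x ∈ TT k f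
  · have := Finset.ext_iff.mp e x
    simpa [hx] using this
  · have hxC : x ∈ CC k f := by
      by_contra hc
      exact hx (P.not_CC hc)
    obtain ⟨i, hi, rfl⟩ := Finset.mem_image.mp hxC
    rw [h i (Finset.mem_range.mp hi), h' i (Finset.mem_range.mp hi)]

theorem Pot.bound (P : Pot G k f) (hk : k % 3 = 0) {D : ℕ} {E Z : ℤ}
    (hE : top (gp (TT k f) (PE G (f 0))) D E) (hZ : top (gp (TT k f) (PZ G (f 0))) (D + 1) Z)
    (hE1 : 1 ≤ E) : (numMaxDissoc G : ℤ) ≤ E + 2 * Z := by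
  have hk3 := P.k3
  -- a set of the right size
  have hEc := hE.2
  rw [gp_coeff] at hEc
  have hZc := hZ.2
  rw [gp_coeff] at hZc
  obtain ⟨R, hR⟩ := Finset.card_pos.mp (show 0 < ((TT k f).powerset.filter
    (fun S => PE G (f 0) S ∧ S.card = D)).card by omega)
  rw [Finset.mem_filter, Finset.mem_powerset] at hR
  obtain ⟨S₀, hS₀, hc₀⟩ := P.lower hk hR.1 hR.2.1
  have hlow := le_dissNum hS₀
  -- structure of the maximum sets
  have hmax : ∀ S, IsMaxDissocOn G Set.univ S → IsDissoc G S ∧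
      3 * (S ∩ CC k f).card = 2 * k ∧ (S \ CC k f).card = D := by
    rintro S ⟨-, hS, hc⟩
    have h1 := P.inter_le hS
    have h2 := P.card_split S
    have h3 : (S \ CC k f).card ≤ D := by
      refine gp_card_le hE ?_ ⟨hS.mono Finset.sdiff_subset, ?_⟩
      · intro x hx
        exact P.not_CC (Finset.mem_sdiff.mp hx).2
      · intro h
        exact (Finset.mem_sdiff.mp h).2 (P.mem_CC 0)
    exact ⟨hS, by omega, by omega⟩
  set M : ℕ → Finset (Finset V) := fun j => Finset.univ.filter (fun S =>
    IsMaxDissocOn G Set.univ S ∧ ∀ i < k, f i ∈ S ↔ i % 3 ≠ j) with hM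
  have hinj : ∀ j, Set.InjOn (fun S => S ∩ TT k f) (M j : Set (Finset V)) := by
    intro j S hS S' hS' e
    have h1 := (Finset.mem_filter.mp (Finset.mem_coe.mp hS)).2.2
    have h2 := (Finset.mem_filter.mp (Finset.mem_coe.mp hS')).2.2
    exact P.inj_TT h1 h2 e
  have hnum : numMaxDissoc G ≤ (M 0).card + (M 1).card + (M 2).card := by
    have h1 : numMaxDissoc G = (Finset.univ.filter (IsMaxDissocOn G Set.univ)).card := by
      unfold numMaxDissoc numMaxDissocOn
      rw [Nat.card_eq_fintype_card, Fintype.card_subtype]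
    rw [h1]
    have h2 : Finset.univ.filter (IsMaxDissocOn G Set.univ) ⊆ M 0 ∪ M 1 ∪ M 2 := by
      intro S hS
      have hS' := (Finset.mem_filter.mp hS).2
      obtain ⟨a, b, c⟩ := hmax S hS'
      obtain ⟨j, hj, hp⟩ := P.pattern a b
      have hmem : S ∈ M j := Finset.mem_filter.mpr ⟨Finset.mem_univ _, hS', hp⟩
      have : j = 0 ∨ j = 1 ∨ j = 2 := by omega
      rcases this with rfl | rfl | rfl <;> simp [hmem]
    refine (Finset.card_le_card h2).trans ?_
    refine (Finset.card_union_le _ _).trans ?_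
    have := Finset.card_union_le (M 0) (M 1)
    omega
  have h0 : (M 0).card ≤ ((TT k f).powerset.filter
      (fun S => PE G (f 0) S ∧ S.card = D)).card := by
    rw [← Finset.card_image_of_injOn (hinj 0)]
    refine Finset.card_le_card ?_
    intro Q hQ
    obtain ⟨S, hS, rfl⟩ := Finset.mem_image.mp hQ
    have hS' := (Finset.mem_filter.mp hS).2
    obtain ⟨a, b, c⟩ := hmax S hS'.1
    have hu : f 0 ∉ S := by
      rw [hS'.2 0 (by omega)]
      simp
    have e : S ∩ TT k f = S \ CC k f := by
      ext x
      simp only [Finset.mem_inter, Finset.mem_sdiff]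
      constructor
      · rintro ⟨h1, h2⟩
        refine ⟨h1, fun h3 => ?_⟩
        rw [P.TT_inter_CC h2 h3] at h1
        exact hu h1
      · rintro ⟨h1, h2⟩
        exact ⟨h1, P.not_CC h2⟩
    rw [Finset.mem_filter, Finset.mem_powerset]
    refine ⟨Finset.inter_subset_right, ⟨a.mono Finset.inter_subset_left, ?_⟩, ?_⟩
    · exact fun h => hu (Finset.mem_inter.mp h).1
    · simp only [e, c]
  have h12 : ∀ j i, 0 < j → 0 < i → i < k → i % 3 ≠ j → G.Adj (f 0) (f i) →
      (M j).card ≤ ((TT k f).powerset.filter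
        (fun S => PZ G (f 0) S ∧ S.card = D + 1)).card := by
    intro j i hj hi0 hik hij hadj
    rw [← Finset.card_image_of_injOn (hinj j)]
    refine Finset.card_le_card ?_
    intro Q hQ
    obtain ⟨S, hS, rfl⟩ := Finset.mem_image.mp hQ
    have hS' := (Finset.mem_filter.mp hS).2
    obtain ⟨a, b, c⟩ := hmax S hS'.1
    have hu : f 0 ∈ S := by
      rw [hS'.2 0 (by omega)]
      omega
    have hfi : f i ∈ S := (hS'.2 i hik).mpr hij
    have hfiT : f i ∉ TT k f := fun h => mem_TT.mp h i hi0 hik rfl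
    have e : S ∩ TT k f = insert (f 0) (S \ CC k f) := by
      ext x
      simp only [Finset.mem_inter, Finset.mem_sdiff, Finset.mem_insert]
      constructor
      · rintro ⟨h1, h2⟩
        by_cases h3 : x ∈ CC k f
        · exact Or.inl (P.TT_inter_CC h2 h3)
        · exact Or.inr ⟨h1, h3⟩
      · rintro (rfl | ⟨h1, h2⟩)
        · exact ⟨hu, P.zero_mem⟩
        · exact ⟨h1, P.not_CC h2⟩
    rw [Finset.mem_filter, Finset.mem_powerset]
    refine ⟨Finset.inter_subset_right, ⟨a.mono Finset.inter_subset_left,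
      Finset.mem_inter.mpr ⟨hu, P.zero_mem⟩, ?_⟩, ?_⟩
    · have h3 := a _ hu
      rw [nbrCount_eq, Finset.card_le_one] at h3
      rw [nbrCount_eq, Finset.card_eq_zero, Finset.filter_eq_empty_iff]
      intro x hx hux
      have hx' := Finset.mem_inter.mp hx
      have : x = f i := h3 x (Finset.mem_filter.mpr ⟨hx'.1, hux⟩) (f i)
        (Finset.mem_filter.mpr ⟨hfi, hadj⟩)
      exact hfiT (this ▸ hx'.2)
    · simp only [e]
      rw [Finset.card_insert_of_notMem, c]
      simp [P.mem_CC 0]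
  have hl : G.Adj (f 0) (f (k - 1)) := by
    have := P.adj (k - 1)
    rw [show k - 1 + 1 = 0 + k by omega, P.per] at this
    exact this.symm
  have h1 := h12 1 (k - 1) (by omega) (by omega) (by omega) (by omega) hl
  have h2 := h12 2 1 (by omega) (by omega) (by omega) (by omega) (P.adj 0)
  omega

end count

theorem potted_bound_k_mod3_eq_0 {V : Type*} [Fintype V] (G : SimpleGraph V) (n k : ℕ)
    (hn : Fintype.card V = n) (hk0 : 0 < k) (hk3 : 3 ≤ k) (hkmod : k % 3 = 0)
    (hnk : k + 4 ≤ n) (hG : IsPotted G k) :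
    (n % 3 = 0 → numMaxDissoc G ≤ 3 ^ ((n - k) / 3) + (n - k) / 3 + 1) ∧
    (n % 3 = 1 → numMaxDissoc G ≤ 3 ^ ((n - k - 1) / 3) + 1) ∧
    (n % 3 = 2 → numMaxDissoc G ≤ 3 ^ ((n - k - 2) / 3)) := by
  obtain ⟨f, P⟩ := exists_pot hG hk3
  have hcard := P.card_TT
  have hst := (P.rt hG.1 hG.2.1).st
  rw [show (TT k f).card = (n - k) + 1 by omega] at hst
  obtain ⟨D, E, Z, hE, hZ, hE1, hb⟩ := hst.goal (by omega)
  have hfin := (P.bound hkmod hE hZ hE1).trans hb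
  unfold bb at hfin
  refine ⟨fun h => ?_, fun h => ?_, fun h => ?_⟩
  · rw [if_pos (by omega)] at hfin
    zify
    rw [Int.natCast_div] at hfin
    push_cast [show k ≤ n by omega] at hfin ⊢
    linarith
  · rw [if_neg (by omega), if_pos (by omega)] at hfin
    rw [show (n - k - 1) / 3 = (n - k) / 3 by omega]
    exact_mod_cast hfin
  · rw [if_neg (by omega), if_neg (by omega)] at hfin
    rw [show (n - k - 2) / 3 = (n - k) / 3 by omega]
    rw [add_zero] at hfin
    exact_mod_cast hfin
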